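/- arXiv:1301.1401 — 6 statements merged into one kernel-verified Lean document; each statement's English description precedes it below -/
import Mathlib

section
/- Let p be a prime with p ≠ 3 and m, n ∈ ℕ. Then K_1(C_{p^m} ⊕ C_3^n) = Σ_{k=1}^m 1/p^{k−1} + n = (p^m − 1)/(p^m − p^{m−1}) + n. -/
open Finset

/-- `S(I)` is minimal zero-sum: nonempty, zero-sum, and no proper nonempty
subfamily is zero-sum. -/
def IsMinZeroSum {G : Type*} [AddCommGroup G] {ℓ : ℕ} (g : Fin ℓ → G)
    (I : Finset (Fin ℓ)) : Prop :=
  I.Nonempty ∧ ∑ i ∈ I, g i = 0 ∧ ∀ J ⊂ I, J.Nonempty → ∑ i ∈ J, g i ≠ 0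

/-- `P` is an irreducible factorization of the indexed multiset `g`: a partition
of the index set all of whose parts are minimal zero-sum. -/
def IsFactorization {G : Type*} [AddCommGroup G] {ℓ : ℕ} (g : Fin ℓ → G)
    (P : Finpartition (Finset.univ : Finset (Fin ℓ))) : Prop :=
  ∀ I ∈ P.parts, IsMinZeroSum g I

/-- `g` is a unique factorization indexed multiset (UFIM) over `G∖{0}`:
all elements are nonzero and there is exactly one irreducible factorization. -/
def IsUFIM {G : Type*} [AddCommGroup G] {ℓ : ℕ} (g : Fin ℓ → G) : Prop :=
  (∀ i, g i ≠ 0) ∧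
  ∃! P : Finpartition (Finset.univ : Finset (Fin ℓ)), IsFactorization g P

/-- The cross number `k(S) = ∑ 1/ord(g_i)`. -/
noncomputable def crossNum {G : Type*} [AddCommGroup G] {ℓ : ℕ} (g : Fin ℓ → G) : ℝ :=
  ∑ i, (1 : ℝ) / (addOrderOf (g i) : ℝ)

/-- `K₁(G)`: the maximal cross number of a UFIM over `G∖{0}`. -/
noncomputable def K1 (G : Type*) [AddCommGroup G] : ℝ :=
  sSup {x : ℝ | ∃ (ℓ : ℕ) (g : Fin ℓ → G), IsUFIM g ∧ crossNum g = x}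

/-- `N₁(G)`: the maximal length of a UFIM over `G∖{0}`. -/
noncomputable def N1 (G : Type*) [AddCommGroup G] : ℕ :=
  sSup {n : ℕ | ∃ g : Fin n → G, IsUFIM g}

/-- `K(G)`: the maximal cross number of a minimal zero-sum indexed multiset over `G∖{0}`. -/
noncomputable def Kcross (G : Type*) [AddCommGroup G] : ℝ :=
  sSup {x : ℝ | ∃ (ℓ : ℕ) (g : Fin ℓ → G), (∀ i, g i ≠ 0) ∧
    IsMinZeroSum g Finset.univ ∧ crossNum g = x}

/-- `g` is zero-sum free: no nonempty subfamily is zero-sum. -/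
def IsZeroSumFree {G : Type*} [AddCommGroup G] {ℓ : ℕ} (g : Fin ℓ → G) : Prop :=
  ∀ I : Finset (Fin ℓ), I.Nonempty → ∑ i ∈ I, g i ≠ 0

/-- The little cross number `k(G)`: the maximal cross number of a zero-sum free
indexed multiset over `G∖{0}`. -/
noncomputable def littleCross (G : Type*) [AddCommGroup G] : ℝ :=
  sSup {x : ℝ | ∃ (ℓ : ℕ) (g : Fin ℓ → G), (∀ i, g i ≠ 0) ∧
    IsZeroSumFree g ∧ crossNum g = x}


set_option linter.unusedSectionVars false

namespace UF

section basics
variable {ι G : Type} [Fintype ι] [DecidableEq ι] [AddCommGroup G]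

/-- Zero-sum families whose zero-sum subsets are closed under intersection. -/
def Good (g : ι → G) : Prop :=
  ∑ i, g i = 0 ∧ ∀ I J : Finset ι, ∑ i ∈ I, g i = 0 → ∑ i ∈ J, g i = 0 → ∑ i ∈ I ∩ J, g i = 0

lemma Good.sdiff {g : ι → G} (h : Good g) {I J : Finset ι} (hI : ∑ i ∈ I, g i = 0)
    (hJ : ∑ i ∈ J, g i = 0) : ∑ i ∈ I \ J, g i = 0 := by
  have h1 := h.2 I J hI hJ
  have h2 := Finset.sum_inter_add_sum_sdiff I J g
  rw [h1, hI, zero_add] at h2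
  exact h2

lemma sum_compl_eq {g : ι → G} (h : ∑ i, g i = 0) (I : Finset ι) :
    ∑ i ∈ Iᶜ, g i = - ∑ i ∈ I, g i := by
  have := Finset.sum_add_sum_compl I g
  rw [h] at this
  exact (neg_eq_of_add_eq_zero_right this).symm

/-- Merging along a map. -/
lemma Good.push {κ : Type} [Fintype κ] [DecidableEq κ] {g : ι → G} (h : Good g) (f : ι → κ)
    (g' : κ → G) (hg' : ∀ k, g' k = ∑ i with f i = k, g i) : Good g' := by
  have key : ∀ I : Finset κ, ∑ k ∈ I, g' k = ∑ i with f i ∈ I, g i := by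
    intro I
    rw [← Finset.sum_fiberwise_of_maps_to (s := univ.filter (fun i => f i ∈ I)) (t := I) (g := f)
      (by simp)]
    refine Finset.sum_congr rfl fun k hk => ?_
    rw [hg', Finset.filter_filter]
    refine Finset.sum_congr ?_ fun _ _ => rfl
    ext i
    simp only [Finset.mem_filter, Finset.mem_univ, true_and]
    constructor
    · rintro rfl; exact ⟨hk, rfl⟩
    · exact fun h => h.2
  refine ⟨?_, fun I J hI hJ => ?_⟩
  · rw [key]; simpa using h.1
  · rw [key] at *
    have := h.2 _ _ hI hJ
    rw [← Finset.filter_and] at this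
    simpa using this

/-- existence of a minimal nonempty zero-sum subset -/
lemma exists_min (g : ι → G) (U : Finset ι) (hU : ∑ i ∈ U, g i = 0) (hne : U.Nonempty) :
    ∃ S ⊆ U, S.Nonempty ∧ ∑ i ∈ S, g i = 0 ∧
      ∀ J ⊂ S, J.Nonempty → ∑ i ∈ J, g i ≠ 0 := by
  classical
  induction U using Finset.strongInduction with
  | H U ih =>
    by_cases h : ∀ J ⊂ U, J.Nonempty → ∑ i ∈ J, g i ≠ 0
    · exact ⟨U, subset_rfl, hne, hU, h⟩
    · push Not at h
      obtain ⟨J, hJ, hJn, hJ0⟩ := h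
      obtain ⟨S, hS, h1⟩ := ih J hJ hJ0 hJn
      exact ⟨S, hS.trans hJ.1, h1⟩

/-- prefix sums -/
lemma prefix_sets (T : Finset ι) :
    ∃ P : ℕ → Finset ι, (∀ j, P j ⊆ T) ∧ (∀ j k, j ≤ k → P j ⊆ P k) ∧
      ∀ j k, j < k → k < T.card → (P k \ P j).Nonempty ∧ P k \ P j ⊂ T := by
  classical
  let r : ι → ℕ := fun i => if h : i ∈ T then (T.equivFin ⟨i, h⟩ : ℕ) else 0
  have hr : ∀ j, j < T.card → ∃ i ∈ T, r i = j := by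
    intro j hj
    refine ⟨(T.equivFin.symm ⟨j, hj⟩ : T), Subtype.coe_prop _, ?_⟩
    simp [r]
  refine ⟨fun j => T.filter (fun i => r i < j), fun j => Finset.filter_subset _ _, ?_, ?_⟩
  · intro j k hjk i
    simp only [Finset.mem_filter]
    rintro ⟨h1, h2⟩; exact ⟨h1, by omega⟩
  · intro j k hjk hk
    obtain ⟨i, hi, hij⟩ := hr j (by omega)
    obtain ⟨i', hi', hij'⟩ := hr k hk
    refine ⟨⟨i, ?_⟩, ?_⟩
    · simp [hi, hij, hjk]
    · rw [Finset.ssubset_iff_of_subset]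
      · exact ⟨i', hi', by simp [hij']⟩
      · intro x; simp only [Finset.mem_sdiff, Finset.mem_filter]; tauto

lemma sum_prefix_diff (g : ι → G) {A B : Finset ι} (h : A ⊆ B) :
    ∑ i ∈ B \ A, g i = ∑ i ∈ B, g i - ∑ i ∈ A, g i := by
  rw [eq_sub_iff_add_eq, Finset.sum_sdiff h]

lemma davenport [DecidableEq G] (g : ι → G) (T : Finset ι) (F : Finset G)
    (hF : ∀ I ⊆ T, ∑ i ∈ I, g i ∈ F)
    (hT : F.card < T.card) : ∃ J ⊂ T, J.Nonempty ∧ ∑ i ∈ J, g i = 0 := by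
  obtain ⟨P, h1, h2, h3⟩ := prefix_sets T
  obtain ⟨j, hj, k, hk, hne, he⟩ := Finset.exists_ne_map_eq_of_card_lt_of_maps_to
    (s := Finset.range T.card) (t := F) (by simpa using hT)
    (f := fun j => ∑ i ∈ P j, g i) (fun j _ => hF _ (h1 j))
  simp only [Finset.mem_range] at hj hk
  rcases lt_or_gt_of_ne hne with h | h
  · exact ⟨_, (h3 j k h hk).2, (h3 j k h hk).1, by rw [sum_prefix_diff g (h2 _ _ h.le), he, sub_self]⟩
  · exact ⟨_, (h3 k j h hj).2, (h3 k j h hj).1, by rw [sum_prefix_diff g (h2 _ _ h.le), he, sub_self]⟩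

lemma atom_values [DecidableEq G] (g : ι → G) (S : Finset ι) (h0 : ∑ i ∈ S, g i = 0)
    (hmin : ∀ J ⊂ S, J.Nonempty → ∑ i ∈ J, g i ≠ 0) :
    ∃ V : Finset G, V.card = S.card ∧ ∀ v ∈ V, ∀ v' ∈ V, ∃ D ⊆ S, ∑ i ∈ D, g i = v - v' := by
  obtain ⟨P, h1, h2, h3⟩ := prefix_sets S
  refine ⟨(Finset.range S.card).image (fun j => ∑ i ∈ P j, g i), ?_, ?_⟩
  · rw [Finset.card_image_of_injOn, Finset.card_range]
    intro j hj k hk he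
    simp only [Finset.coe_range, Set.mem_Iio] at hj hk
    dsimp only at he
    by_contra hne
    rcases lt_or_gt_of_ne hne with h | h
    · exact hmin _ (h3 j k h hk).2 (h3 j k h hk).1
        (by rw [sum_prefix_diff g (h2 _ _ h.le), he, sub_self])
    · exact hmin _ (h3 k j h hj).2 (h3 k j h hj).1
        (by rw [sum_prefix_diff g (h2 _ _ h.le), he, sub_self])
  · intro v hv v' hv'
    simp only [Finset.mem_image, Finset.mem_range] at hv hv'
    obtain ⟨j, hj, rfl⟩ := hv
    obtain ⟨k, hk, rfl⟩ := hv'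
    rcases le_total k j with h | h
    · exact ⟨P j \ P k, Finset.sdiff_subset.trans (h1 _), sum_prefix_diff g (h2 _ _ h)⟩
    · refine ⟨S \ (P k \ P j), Finset.sdiff_subset, ?_⟩
      rw [sum_prefix_diff g (Finset.sdiff_subset.trans (h1 _)), sum_prefix_diff g (h2 _ _ h), h0]
      abel

lemma card_atom (g : ι → G) (S : Finset ι) (hne : S.Nonempty) (h0 : ∑ i ∈ S, g i = 0)
    (hnz : ∀ i ∈ S, g i ≠ 0) : 2 ≤ S.card := by
  have h1 := hne.card_pos
  by_contra h
  obtain ⟨a, ha⟩ := Finset.card_eq_one.1 (show S.card = 1 by omega)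
  subst ha
  simp at h0 hnz
  exact hnz h0

lemma Good.values [DecidableEq G] {g : ι → G} (h : Good g) (U : Finset ι)
    (hU : ∑ i ∈ U, g i = 0) (hnz : ∀ i ∈ U, g i ≠ 0) :
    ∃ V : Finset G, V.Nonempty ∧ U.card ≤ V.card ∧
      ∀ v ∈ V, ∀ v' ∈ V, ∃ D ⊆ U, ∑ i ∈ D, g i = v - v' := by
  induction U using Finset.strongInduction with
  | H U ih =>
    rcases U.eq_empty_or_nonempty with rfl | hne
    · exact ⟨{0}, by simp, by simp, by simp⟩
    obtain ⟨S, hSU, hSne, hS0, hSmin⟩ := exists_min g U hU hne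
    have hR0 : ∑ i ∈ U \ S, g i = 0 := h.sdiff hU hS0
    obtain ⟨V, hVne, hVc, hV⟩ := ih (U \ S) (Finset.sdiff_ssubset hSU hSne) hR0
      (fun i hi => hnz i (Finset.sdiff_subset hi))
    obtain ⟨W, hWc, hW⟩ := atom_values g S hS0 hSmin
    have hS2 := card_atom g S hSne hS0 (fun i hi => hnz i (hSU hi))
    have hcard : (U \ S).card + S.card = U.card := Finset.card_sdiff_add_card_eq_card hSU
    refine ⟨(W ×ˢ V).image (fun x => x.1 + x.2), ?_, ?_, ?_⟩
    · refine (Finset.Nonempty.product ?_ hVne).image _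
      rw [← Finset.card_pos]; omega
    · rw [Finset.card_image_of_injOn, Finset.card_product]
      · rcases (U \ S).eq_empty_or_nonempty with h0 | h0
        · have := hVne.card_pos
          rw [h0] at hcard
          simp at hcard
          nlinarith
        · have h3 := card_atom g _ h0 hR0 (fun i hi => hnz i (Finset.sdiff_subset hi))
          rw [hWc]
          nlinarith
      · rintro ⟨a, b⟩ hab ⟨c, d⟩ hcd he
        simp only [Finset.coe_product, Set.mem_prod, Finset.mem_coe] at hab hcd he
        obtain ⟨D1, hD1, e1⟩ := hW a hab.1 c hcd.1
        obtain ⟨D2, hD2, e2⟩ := hV b hab.2 d hcd.2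
        have hdis : Disjoint D1 D2 := Finset.disjoint_of_subset_left hD1
          (Finset.disjoint_of_subset_right hD2 Finset.disjoint_sdiff)
        have hz : ∑ i ∈ D1 ∪ D2, g i = 0 := by
          rw [Finset.sum_union hdis, e1, e2]
          have : a - c + (b - d) = (a + b) - (c + d) := by abel
          rw [this, he, sub_self]
        have hz2 := h.2 _ _ hz hS0
        have : (D1 ∪ D2) ∩ S = D1 := by
          ext i
          have a1 := @hD1 i
          have a2 := @hD2 i
          simp only [Finset.mem_sdiff, Finset.mem_inter, Finset.mem_union] at *
          tauto
        rw [this, e1] at hz2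
        have hac := sub_eq_zero.1 hz2
        subst hac
        have := add_left_cancel he
        subst this
        rfl
    · intro v hv v' hv'
      simp only [Finset.mem_image, Finset.mem_product] at hv hv'
      obtain ⟨⟨a, b⟩, hab, rfl⟩ := hv
      obtain ⟨⟨c, d⟩, hcd, rfl⟩ := hv'
      obtain ⟨D1, hD1, e1⟩ := hW a hab.1 c hcd.1
      obtain ⟨D2, hD2, e2⟩ := hV b hab.2 d hcd.2
      have hdis : Disjoint D1 D2 := Finset.disjoint_of_subset_left hD1
          (Finset.disjoint_of_subset_right hD2 Finset.disjoint_sdiff)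
      refine ⟨D1 ∪ D2, Finset.union_subset (hD1.trans hSU) (hD2.trans Finset.sdiff_subset), ?_⟩
      rw [Finset.sum_union hdis, e1, e2]
      abel

lemma sum_supp [DecidableEq G] (g : ι → G) (I : Finset ι) :
    ∑ i ∈ I with g i ≠ 0, g i = ∑ i ∈ I, g i := Finset.sum_filter_ne_zero I

/-- number of nonzero terms bounded by the size of a finset closed under the relevant sums -/
lemma Good.card_supp_le [DecidableEq G] {g : ι → G} (h : Good g) (F : Finset G)
    (hF : ∀ I : Finset ι, ∑ i ∈ I, g i ∈ F) :
    (univ.filter (fun i => g i ≠ 0)).card ≤ F.card := by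
  obtain ⟨V, ⟨v0, hv0⟩, hc, hV⟩ := h.values (univ.filter (fun i => g i ≠ 0))
    (by rw [sum_supp]; exact h.1) (by simp)
  refine hc.trans ?_
  refine Finset.card_le_card_of_injOn (fun v => v - v0) ?_ ?_
  · intro v hv
    obtain ⟨D, -, hD⟩ := hV v hv v0 hv0
    dsimp only
    rw [← hD]; exact hF D
  · intro a _ b _ hab
    simpa using hab

end basics
end UF

namespace UF
section three

lemma card_support_two {σ : Type} [Fintype σ] [DecidableEq σ] (I : Finset σ) :
    (univ.filter (fun x : σ → ZMod 3 => univ.filter (fun i => x i ≠ 0) = I)).card = 2 ^ I.card := by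
  have : (univ.filter (fun x : σ → ZMod 3 => univ.filter (fun i => x i ≠ 0) = I)) =
      Fintype.piFinset (fun i => if i ∈ I then ({1, 2} : Finset (ZMod 3)) else {0}) := by
    ext x
    simp only [Finset.mem_filter, Finset.mem_univ, true_and, Fintype.mem_piFinset, Finset.ext_iff]
    refine forall_congr' fun i => ?_
    have h3 : ∀ y : ZMod 3, (y ≠ 0 ↔ y ∈ ({1, 2} : Finset (ZMod 3))) := by decide
    by_cases hi : i ∈ I
    · simp only [hi, iff_true, if_true]; exact h3 _
    · simp [hi]
  rw [this, Fintype.card_piFinset]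
  have h2 : ∀ i, (if i ∈ I then ({1, 2} : Finset (ZMod 3)) else {0}).card = if i ∈ I then 2 else 1 := by
    intro i; split_ifs <;> decide
  simp only [h2]
  rw [Finset.prod_ite_mem]
  simp

lemma sq3 : ∀ u v : ZMod 3, u * v ^ 2 = if v ≠ 0 then u else 0 := by decide

open MvPolynomial in
lemma cw {σ : Type} [Fintype σ] [DecidableEq σ] {n : ℕ} (h : σ → Fin n → ZMod 3)
    (hc : 2 * n < Fintype.card σ) :
    3 ∣ ∑ I : Finset σ with ∑ i ∈ I, h i = 0, 2 ^ I.card := by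
  have : Fact (Nat.Prime 3) := ⟨by norm_num⟩
  let f : Fin n → MvPolynomial σ (ZMod 3) := fun a => ∑ i, C (h i a) * X i ^ 2
  have hdeg : ∀ a, (f a).totalDegree ≤ 2 := by
    intro a
    refine MvPolynomial.totalDegree_finsetSum_le fun i _ => ?_
    refine (totalDegree_mul _ _).trans ?_
    simp [totalDegree_X_pow]
  have hsum : ∑ a, (f a).totalDegree < Fintype.card σ := by
    refine lt_of_le_of_lt (Finset.sum_le_sum fun a _ => hdeg a) ?_
    simp; omega
  have := char_dvd_card_solutions_of_fintype_sum_lt (K := ZMod 3) 3 hsum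
  rw [Fintype.card_subtype] at this
  convert! this using 1
  rw [Finset.card_eq_sum_card_fiberwise (f := fun x : σ → ZMod 3 => univ.filter (fun i => x i ≠ 0))
    (t := univ.filter (fun I : Finset σ => ∑ i ∈ I, h i = 0))]
  · refine Finset.sum_congr rfl fun I hI => ?_
    rw [← card_support_two, Finset.filter_filter]
    congr 1
    ext x
    simp only [Finset.mem_filter, Finset.mem_univ, true_and] at hI ⊢
    constructor
    · intro hx
      refine ⟨fun a => ?_, hx⟩
      have := congrFun hI a
      rw [← hx, Finset.sum_apply, Finset.sum_filter, Pi.zero_apply] at this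
      refine Eq.trans ?_ this
      simp only [f, map_sum, map_mul, map_pow, eval_C, eval_X]
      refine Finset.sum_congr rfl fun i _ => ?_
      exact sq3 _ _
    · exact fun h => h.2
  · intro x hx
    simp only [Finset.coe_filter, Finset.mem_univ, true_and, Set.mem_ofPred_eq] at hx ⊢
    funext a
    rw [Finset.sum_apply, Finset.sum_filter, Pi.zero_apply]
    refine Eq.trans ?_ (hx a)
    simp only [f, map_sum, map_mul, map_pow, eval_C, eval_X]
    refine Finset.sum_congr rfl fun i _ => ?_
    exact (sq3 _ _).symm

lemma not_three_dvd {σ G : Type} [Fintype σ] [DecidableEq σ] [AddCommGroup G] [DecidableEq G]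
    (h : σ → G)
    (hs : ∀ I J : Finset σ, ∑ i ∈ I, h i = 0 → ∑ i ∈ J, h i = 0 → ∑ i ∈ symmDiff I J, h i = 0) :
    ¬ 3 ∣ (univ.filter (fun I : Finset σ => ∑ i ∈ I, h i = 0)).card := by
  have hsym : ∀ x y : σ → ZMod 2, univ.filter (fun i => (x + y) i ≠ 0) =
      symmDiff (univ.filter (fun i => x i ≠ 0)) (univ.filter (fun i => y i ≠ 0)) := by
    intro x y
    ext i
    simp only [Finset.mem_symmDiff, Finset.mem_filter, Finset.mem_univ, true_and, Pi.add_apply]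
    generalize x i = u
    generalize y i = v
    revert u v; decide
  let K : AddSubgroup (σ → ZMod 2) :=
    { carrier := {x | ∑ i with x i ≠ 0, h i = 0}
      zero_mem' := by simp
      add_mem' := by
        intro x y hx hy
        simp only [Set.mem_ofPred_eq] at *
        rw [hsym]
        exact hs _ _ hx hy
      neg_mem' := by
        intro x hx
        simpa using hx }
  have hdvd := K.card_addSubgroup_dvd_card
  have : Fintype K := Fintype.ofFinite K
  have hK : Nat.card K = (univ.filter (fun I : Finset σ => ∑ i ∈ I, h i = 0)).card := by
    rw [Nat.card_eq_fintype_card, ← Finset.card_univ]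
    refine Finset.card_bij (fun x _ => univ.filter (fun i => x.1 i ≠ 0)) ?_ ?_ ?_
    · rintro ⟨x, hx⟩ _
      simp only [Finset.mem_filter, Finset.mem_univ, true_and]
      exact hx
    · rintro ⟨x, hx⟩ _ ⟨y, hy⟩ _ hxy
      simp only [Finset.ext_iff, Finset.mem_filter, Finset.mem_univ, true_and] at hxy
      refine Subtype.ext (funext fun i => ?_)
      have := hxy i
      revert this
      change (x i ≠ 0 ↔ y i ≠ 0) → x i = y i
      generalize x i = u
      generalize y i = v
      revert u v; decide
    · intro I hI
      simp only [Finset.mem_filter, Finset.mem_univ, true_and] at hI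
      have hI' : univ.filter (fun i => (if i ∈ I then (1 : ZMod 2) else 0) ≠ 0) = I := by
        ext i; simp
      refine ⟨⟨fun i => if i ∈ I then 1 else 0, ?_⟩, Finset.mem_univ _, hI'⟩
      change ∑ i with (if i ∈ I then (1 : ZMod 2) else 0) ≠ 0, h i = 0
      rw [hI']; exact hI
  rw [hK] at hdvd
  intro h3
  have := h3.trans hdvd
  rw [Nat.card_eq_fintype_card, Fintype.card_fun, ZMod.card] at this
  have := Nat.Prime.dvd_of_dvd_pow (by norm_num) this
  omega

end three

section three'
variable {ι G : Type} [Fintype ι] [DecidableEq ι] [AddCommGroup G]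

lemma Good.even_set [DecidableEq G] {g : ι → G} (h : Good g) (U : Finset ι)
    (hU : ∑ i ∈ U, g i = 0) (hnz : ∀ i ∈ U, g i ≠ 0) :
    ∃ D ⊆ U, 2 * U.card ≤ 3 * D.card ∧ ∀ I ⊆ D, ∑ i ∈ I, g i = 0 → Even I.card := by
  induction U using Finset.strongInduction with
  | H U ih =>
    rcases U.eq_empty_or_nonempty with rfl | hne
    · refine ⟨∅, by simp, by simp, ?_⟩
      intro I hI _
      rw [Finset.subset_empty.1 hI]; simp
    obtain ⟨S, hSU, hSne, hS0, hSmin⟩ := exists_min g U hU hne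
    have hR0 : ∑ i ∈ U \ S, g i = 0 := h.sdiff hU hS0
    obtain ⟨D', hD', hDc, hDe⟩ := ih (U \ S) (Finset.sdiff_ssubset hSU hSne) hR0
      (fun i hi => hnz i (Finset.sdiff_subset hi))
    have hS2 := card_atom g S hSne hS0 (fun i hi => hnz i (hSU hi))
    have hcard : (U \ S).card + S.card = U.card := Finset.card_sdiff_add_card_eq_card hSU
    obtain ⟨E, hES, hEc, hEe⟩ : ∃ E ⊆ S, 2 * S.card ≤ 3 * E.card ∧ (E = S → Even S.card) := by
      rcases Nat.even_or_odd S.card with he | ho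
      · exact ⟨S, subset_rfl, by omega, fun _ => he⟩
      · obtain ⟨s, hs⟩ := hSne
        refine ⟨S.erase s, Finset.erase_subset _ _, ?_, ?_⟩
        · rw [Finset.card_erase_of_mem hs]
          obtain ⟨k, hk⟩ := ho
          omega
        · intro hh
          rw [← hh] at hs
          simp at hs
    have hdis : Disjoint D' E := (Finset.disjoint_of_subset_left hD'
          (Finset.disjoint_of_subset_right hES Finset.sdiff_disjoint))
    refine ⟨D' ∪ E, Finset.union_subset (hD'.trans Finset.sdiff_subset) (hES.trans hSU), ?_, ?_⟩
    · rw [Finset.card_union_of_disjoint hdis]; omega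
    · intro I hI hI0
      have h1 := h.2 _ _ hI0 hS0
      have h2 := h.sdiff hI0 hS0
      have h3 : I \ S ⊆ D' := by
        intro i hi
        have a1 := @hI i
        have a2 := @hES i
        simp only [Finset.mem_sdiff, Finset.mem_union] at *
        tauto
      have h4 : I ∩ S ⊆ E := by
        intro i hi
        have a1 := @hI i
        have a2 := @hD' i
        simp only [Finset.mem_sdiff, Finset.mem_union, Finset.mem_inter] at *
        tauto
      rw [← Finset.card_sdiff_add_card_inter I S]
      refine (hDe _ h3 h2).add ?_
      rcases (I ∩ S).eq_empty_or_nonempty with h0 | h0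
      · rw [h0]; simp
      · have : I ∩ S = S := by
          by_contra hne
          exact hSmin _ (lt_of_le_of_ne Finset.inter_subset_right hne) h0 h1
        rw [this] at h4 ⊢
        exact hEe (subset_antisymm hES h4)

lemma Good.symmD {g : ι → G} (h : Good g) {I J : Finset ι} (hI : ∑ i ∈ I, g i = 0)
    (hJ : ∑ i ∈ J, g i = 0) : ∑ i ∈ symmDiff I J, g i = 0 := by
  rw [show symmDiff I J = (I \ J) ∪ (J \ I) from rfl, Finset.sum_union, h.sdiff hI hJ, h.sdiff hJ hI, add_zero]
  exact disjoint_sdiff_sdiff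

lemma Good.card_three {n : ℕ} {g : ι → Fin n → ZMod 3} (h : Good g) :
    (univ.filter (fun i => g i ≠ 0)).card ≤ 3 * n := by
  obtain ⟨D, -, hD, he⟩ := h.even_set (univ.filter (fun i => g i ≠ 0))
    (by rw [sum_supp]; exact h.1) (by simp)
  suffices D.card ≤ 2 * n by omega
  by_contra hlt
  have hmap : ∀ I : Finset D, ∑ i ∈ I, g i = ∑ i ∈ I.map (Function.Embedding.subtype _), g i := by
    intro I; rw [Finset.sum_map]; rfl
  have h3 := cw (σ := D) (fun i => g i) (by rw [Fintype.card_coe]; omega)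
  have h4 := not_three_dvd (σ := D) (fun i => g i) (by
    intro I J hI hJ
    rw [hmap] at *
    have := h.symmD hI hJ
    convert this using 2
    ext i
    simp only [Finset.mem_map, Finset.mem_symmDiff, Function.Embedding.subtype_apply, Subtype.exists]
    grind)
  apply h4
  have h5 : (∑ I : Finset D with ∑ i ∈ I, (fun j : D => g j) i = 0, 2 ^ I.card) ≡
      ∑ I : Finset D with ∑ i ∈ I, (fun j : D => g j) i = 0, 1 [MOD 3] := by
    refine Nat.ModEq.sum fun I hI => ?_
    simp only [Finset.mem_filter, Finset.mem_univ, true_and] at hI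
    have hI := (hmap I).symm.trans hI
    have := he _ (by intro i; simp; tauto) hI
    rw [Finset.card_map] at this
    obtain ⟨k, hk⟩ := this
    rw [hk, ← two_mul, pow_mul]
    simpa using (Nat.ModEq.pow k (show 2 ^ 2 ≡ 1 [MOD 3] by decide))
  rw [Finset.card_eq_sum_ones]
  exact (h5.dvd_iff (dvd_refl 3)).1 h3

end three'
end UF

set_option linter.unusedSectionVars false
namespace UF
section main
variable {ι G : Type} [Fintype ι] [DecidableEq ι] [AddCommGroup G] [DecidableEq G]

/-- `N` bounds the number of nonzero terms of good families killed by `q`. -/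
def Bd (G : Type) [AddCommGroup G] [DecidableEq G] (q N : ℕ) : Prop :=
  ∀ (κ : Type) [Fintype κ] [DecidableEq κ] (h : κ → G), Good h → (∀ i, q • h i = 0) →
    (univ.filter (fun i => h i ≠ 0)).card ≤ N

lemma nsmul_sum_zero {q : ℕ} {g : ι → G} (I : Finset ι) (h : ∀ i ∈ I, q • g i = 0) :
    q • ∑ i ∈ I, g i = 0 := by
  rw [← Finset.sum_nsmul]; exact Finset.sum_eq_zero h

/-- closing a subfamily by one extra element -/
lemma Good.close {g : ι → G} (h : Good g) (B : Finset ι) :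
    Good (fun k : Option ι => k.elim (∑ i ∈ Bᶜ, g i) (fun i => if i ∈ B then g i else 0)) := by
  refine h.push (fun i => if i ∈ B then some i else none) _ ?_
  intro k
  cases k with
  | none =>
    simp only [Option.elim_none]
    refine Finset.sum_congr ?_ fun _ _ => rfl
    ext i
    by_cases hi : i ∈ B <;> simp [hi]
  | some k =>
    simp only [Option.elim_some]
    by_cases hk : k ∈ B
    · have : univ.filter (fun i => (if i ∈ B then some i else none) = some k) = {k} := by
        ext i
        by_cases hi : i ∈ B
        · simp [hi]
        · simp [hi]; rintro rfl; exact hi hk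
      rw [this]; simp [hk]
    · have : univ.filter (fun i => (if i ∈ B then some i else none) = some k) = ∅ := by
        ext i
        by_cases hi : i ∈ B
        · simp [hi]; rintro rfl; exact hk hi
        · simp [hi]
      rw [this]; simp [hk]

lemma Bd.count_aux {q N : ℕ} (hB : Bd G q N) {g : ι → G} (h : Good g) (B : Finset ι)
    (hq : ∀ i ∈ B, q • g i = 0) (hne : ∀ i ∈ B, g i ≠ 0) :
    B.card + (if ∑ i ∈ B, g i = 0 then 0 else 1) ≤ N := by
  have h1 := hB (Option ι) _ (h.close B) (by
    intro k
    cases k with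
    | none =>
      simp only [Option.elim_none]
      rw [sum_compl_eq h.1, smul_neg, nsmul_sum_zero B hq, neg_zero]
    | some i =>
      simp only [Option.elim_some]
      split_ifs with hi
      · exact hq i hi
      · simp)
  refine le_trans ?_ h1
  split_ifs with h0
  · rw [add_zero, ← Finset.card_map Function.Embedding.some]
    apply Finset.card_le_card
    intro k
    simp only [Finset.mem_map, Finset.mem_filter, Finset.mem_univ, true_and]
    rintro ⟨i, hi, rfl⟩
    simp [hi, hne i hi]
  · rw [← Finset.card_map Function.Embedding.some, ← Finset.card_insert_of_notMem (a := none)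
      (by simp)]
    apply Finset.card_le_card
    intro k
    simp only [Finset.mem_map, Finset.mem_insert, Finset.mem_filter, Finset.mem_univ, true_and]
    rintro (rfl | ⟨i, hi, rfl⟩)
    · simp only [Option.elim_none]
      rw [sum_compl_eq h.1]
      simpa using h0
    · simp [hi, hne i hi]

lemma Bd.count {q N : ℕ} (hB : Bd G q N) {g : ι → G} (h : Good g) :
    (univ.filter (fun i => q • g i = 0 ∧ g i ≠ 0)).card ≤ N := by
  have := hB.count_aux h (univ.filter (fun i => q • g i = 0 ∧ g i ≠ 0)) (by simp; tauto)
    (by simp)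
  omega

/-- A maximal family in the `q`-torsion has all `q`-torsion elements as subset sums. -/
lemma Bd.cover_aux {q N : ℕ} (hB : Bd G q N) {g : ι → G} (h : Good g) (A : Finset ι)
    (hA0 : ∑ i ∈ A, g i = 0)
    (hq : ∀ i ∈ A, q • g i = 0) (hne : ∀ i ∈ A, g i ≠ 0) (hN : N ≤ A.card) (x : G)
    (hx : q • x = 0) : ∃ T ⊆ A, ∑ i ∈ T, g i = x := by
  by_contra hcon
  push Not at hcon
  have hx0 : x ≠ 0 := fun h0 => hcon ∅ (by simp) (by simp [h0])
  have hcon' : ∀ T ⊆ A, ∑ i ∈ T, g i ≠ -x := by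
    intro T hT he
    refine hcon (A \ T) Finset.sdiff_subset ?_
    rw [sum_prefix_diff g hT, hA0, he]; simp
  let k : A ⊕ Bool → G := Sum.elim (fun i => g i) (fun b => if b then x else -x)
  have hsum : ∀ I : Finset (A ⊕ Bool), ∑ i ∈ I, k i =
      ∑ i ∈ I.toLeft.map (Function.Embedding.subtype _), g i +
        ∑ b ∈ I.toRight, (if b then x else -x) := by
    intro I
    conv_lhs => rw [← Finset.toLeft_disjSum_toRight (u := I)]
    rw [Finset.sum_disjSum, Finset.sum_map]
    rfl
  have hsub : ∀ I : Finset (A ⊕ Bool), I.toLeft.map (Function.Embedding.subtype _) ⊆ A := by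
    intro I i
    simp
    tauto
  have hR : ∀ R : Finset Bool, R = ∅ ∨ R = {true} ∨ R = {false} ∨ R = {true, false} := by decide
  have hzero : ∀ I : Finset (A ⊕ Bool), ∑ i ∈ I, k i = 0 →
      (∑ i ∈ I.toLeft.map (Function.Embedding.subtype _), g i = 0 ∧
        (I.toRight = ∅ ∨ I.toRight = {true, false})) := by
    intro I hI
    rw [hsum] at hI
    rcases hR I.toRight with h1 | h1 | h1 | h1 <;> rw [h1] at hI ⊢
    · simpa using hI
    · exfalso
      refine hcon' _ (hsub I) ?_
      rw [← eq_neg_iff_add_eq_zero] at hI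
      simpa using hI
    · exfalso
      refine hcon _ (hsub I) ?_
      rw [← eq_neg_iff_add_eq_zero] at hI
      simpa using hI
    · simpa using hI
  have hgood : Good k := by
    refine ⟨?_, fun I J hI hJ => ?_⟩
    · simp only [k, Fintype.sum_sum_type, Sum.elim_inl, Sum.elim_inr, Fintype.sum_bool]
      rw [Finset.sum_coe_sort A g, hA0]
      simp
    · obtain ⟨hI1, hI2⟩ := hzero I hI
      obtain ⟨hJ1, hJ2⟩ := hzero J hJ
      rw [hsum, Finset.toLeft_inter, Finset.toRight_inter, Finset.map_inter, h.2 _ _ hI1 hJ1]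
      rcases hI2 with h1 | h1 <;> rcases hJ2 with h2 | h2 <;> simp [h1, h2]
  have := hB _ k hgood (by
    rintro (i | b)
    · exact hq i i.2
    · cases b <;> simp [k, hx])
  have hall : univ.filter (fun i => k i ≠ 0) = univ := by
    ext i
    simp only [Finset.mem_filter, Finset.mem_univ, true_and, iff_true]
    rcases i with i | b
    · exact hne i i.2
    · cases b <;> simp [k, hx0]
  rw [hall, Finset.card_univ] at this
  simp at this
  omega

lemma Bd.cover {q N : ℕ} (hB : Bd G q N) {g : ι → G} (h : Good g)
    (hN : N ≤ (univ.filter (fun i => q • g i = 0 ∧ g i ≠ 0)).card) : Good (fun i => q • g i) := by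
  set A := univ.filter (fun i => q • g i = 0 ∧ g i ≠ 0) with hA
  have hq : ∀ i ∈ A, q • g i = 0 := by simp [hA]; tauto
  have hne : ∀ i ∈ A, g i ≠ 0 := by simp [hA]
  have hA0 : ∑ i ∈ A, g i = 0 := by
    have := hB.count_aux h A hq hne
    by_contra h0
    rw [if_neg h0] at this
    omega
  have key : ∀ I : Finset ι, q • ∑ i ∈ I, g i = 0 → ∑ i ∈ I \ A, g i = 0 := by
    intro I hI
    have h1 : q • ∑ i ∈ I \ A, g i = 0 := by
      have := Finset.sum_inter_add_sum_sdiff I A g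
      rw [← this, smul_add, nsmul_sum_zero _ (fun i hi => hq i (Finset.inter_subset_right hi)),
        zero_add] at hI
      exact hI
    obtain ⟨T, hT, hTe⟩ := hB.cover_aux h A hA0 hq hne hN (- ∑ i ∈ I \ A, g i) (by simp [h1])
    have hdis : Disjoint (I \ A) T := Finset.disjoint_of_subset_right hT Finset.sdiff_disjoint
    have h2 : ∑ i ∈ (I \ A) ∪ T, g i = 0 := by
      rw [Finset.sum_union hdis, hTe]; simp
    have h3 := h.sdiff h2 hA0
    have : ((I \ A) ∪ T) \ A = I \ A := by
      ext i
      have := @hT i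
      simp only [Finset.mem_sdiff, Finset.mem_union]
      tauto
    rwa [this] at h3
  refine ⟨?_, fun I J hI hJ => ?_⟩
  · rw [Finset.sum_nsmul, h.1, smul_zero]
  · rw [Finset.sum_nsmul] at *
    have h1 := h.2 _ _ (key I hI) (key J hJ)
    have h2 := Finset.sum_inter_add_sum_sdiff (I ∩ J) A g
    have h3 : (I ∩ J) \ A = (I \ A) ∩ (J \ A) := by
      ext i
      simp only [Finset.mem_sdiff, Finset.mem_inter]
      tauto
    rw [h3, h1, add_zero] at h2
    rw [← h2]
    exact nsmul_sum_zero _ (fun i hi => hq i (Finset.inter_subset_right hi))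

/-- weight -/
noncomputable def wt (x : G) : ℝ := if x = 0 then 0 else 1 / (addOrderOf x : ℝ)

lemma wt_zero : wt (0 : G) = 0 := by simp [wt]

/-- total weight -/
noncomputable def tw (g : ι → G) : ℝ := ∑ i, wt (g i)

lemma Good.merge {g : ι → G} (h : Good g) (T : Finset ι) (t : ι) (ht : t ∈ T) :
    Good (fun k => if k ∈ T then (if k = t then ∑ i ∈ T, g i else 0) else g k) := by
  refine h.push (fun i => if i ∈ T then t else i) _ ?_
  intro k
  by_cases hk : k ∈ T
  · simp only [hk, if_true]
    by_cases hkt : k = t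
    · subst hkt
      simp only [if_true]
      refine Finset.sum_congr ?_ fun _ _ => rfl
      ext i
      by_cases hi : i ∈ T
      · simp [hi]
      · simp [hi]; rintro rfl; exact hi hk
    · simp only [hkt, if_false]
      symm
      apply Finset.sum_eq_zero
      intro i hi
      exfalso
      simp only [Finset.mem_filter, Finset.mem_univ, true_and] at hi
      split_ifs at hi with h1
      · exact hkt hi.symm
      · subst hi; exact h1 hk
  · simp only [hk, if_false]
    have : univ.filter (fun i => (if i ∈ T then t else i) = k) = {k} := by
      ext i
      by_cases hi : i ∈ T
      · simp only [Finset.mem_filter, Finset.mem_univ, true_and, hi, if_true, Finset.mem_singleton]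
        constructor
        · rintro rfl; exact absurd ht hk
        · rintro rfl; exact absurd hi hk
      · simp [hi]
    rw [this]; simp

/-- If no class is mergeable, the class is small. -/
lemma class_small {p M : ℕ} (hM : M ≠ 0) (hp : p.Prime) (hpM : p ∣ M) (F : Finset G)
    (hF : ∀ x : G, p • x = 0 → x ∈ F) (hFc : F.card ≤ p) {g : ι → G} (h : Good g)
    (C : Finset ι) (hC : ∀ i ∈ C, addOrderOf (g i) = M)
    (hno : ∀ T ⊆ C, (M / p) • ∑ i ∈ T, g i = 0 → ∑ i ∈ T, g i = 0) : C.card ≤ p := by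
  have hMp : p * (M / p) = M := Nat.mul_div_cancel' hpM
  have hclose := h.close C
  set k : Option ι → G :=
    (fun k : Option ι => k.elim (∑ i ∈ Cᶜ, g i) (fun i => if i ∈ C then g i else 0)) with hk
  have hMk : ∀ j, M • k j = 0 := by
    intro j
    cases j with
    | none =>
      simp only [hk, Option.elim_none]
      rw [sum_compl_eq h.1, smul_neg, nsmul_sum_zero C, neg_zero]
      intro i hi
      rw [← hC i hi]; exact addOrderOf_nsmul_eq_zero _
    | some i =>
      simp only [hk, Option.elim_some]
      split_ifs with hi
      · rw [← hC i hi]; exact addOrderOf_nsmul_eq_zero _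
      · simp
  have hnn : ∀ I : Finset (Option ι), none ∉ I → ∃ T ⊆ C, ∑ j ∈ I, k j = ∑ i ∈ T, g i := by
    intro I hI
    refine ⟨C.filter (fun i => some i ∈ I), Finset.filter_subset _ _, ?_⟩
    have : I = (univ.filter (fun i => some i ∈ I)).map Function.Embedding.some := by
      ext j
      cases j with
      | none => simp [hI]
      | some i => simp
    conv_lhs => rw [this]
    rw [Finset.sum_map]
    simp only [hk, Function.Embedding.some_apply, Option.elim_some]
    rw [← Finset.sum_filter, Finset.filter_filter]
    refine Finset.sum_congr ?_ fun _ _ => rfl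
    ext i; simp; tauto
  have key : ∀ I : Finset (Option ι), (M / p) • ∑ j ∈ I, k j = 0 → ∑ j ∈ I, k j = 0 := by
    intro I hI
    by_cases hn : none ∈ I
    · obtain ⟨T, hT, hTe⟩ := hnn Iᶜ (by simpa using hn)
      have h1 := sum_compl_eq hclose.1 I
      rw [hTe] at h1
      have := hno T hT (by rw [h1, smul_neg, hI, neg_zero])
      rw [this] at h1
      simpa using h1.symm
    · obtain ⟨T, hT, hTe⟩ := hnn I hn
      rw [hTe] at hI ⊢
      exact hno T hT hI
  have hgood : Good (fun j => (M / p) • k j) := by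
    refine ⟨?_, fun I J hI hJ => ?_⟩
    · rw [Finset.sum_nsmul, hclose.1, smul_zero]
    · rw [Finset.sum_nsmul] at *
      rw [hclose.2 _ _ (key I hI) (key J hJ), smul_zero]
  have hle := hgood.card_supp_le F (by
    intro I
    apply hF
    apply nsmul_sum_zero
    intro j _
    rw [← mul_nsmul', hMp]; exact hMk j)
  refine le_trans ?_ (hle.trans hFc)
  rw [← Finset.card_map Function.Embedding.some]
  apply Finset.card_le_card
  intro j
  simp only [Finset.mem_map, Finset.mem_filter, Finset.mem_univ, true_and]
  rintro ⟨i, hi, rfl⟩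
  simp only [hk, Function.Embedding.some_apply, Option.elim_some, hi, if_true]
  intro h0
  have h1 := addOrderOf_dvd_of_nsmul_eq_zero h0
  rw [hC i hi] at h1
  have h2 := Nat.le_of_dvd (Nat.div_pos (Nat.le_of_dvd (Nat.pos_of_ne_zero hM) hpM) hp.pos) h1
  have h3 := Nat.div_lt_self (Nat.pos_of_ne_zero hM) hp.one_lt
  omega

lemma reduce {p N : ℕ} (hp : p.Prime) (F : Finset G)
    (hF : ∀ x : G, x ∈ F ↔ p • x = 0) (hFc : F.card ≤ p) (g : ι → G) (h : Good g)
    (hg : ∀ i, N • g i = 0) :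
    ∃ g' : ι → G, Good g' ∧ (∀ i, N • g' i = 0) ∧ tw g ≤ tw g' ∧
      ∀ M, M ≠ 0 → p ∣ M → (univ.filter (fun i => addOrderOf (g' i) = M)).card ≤ p := by
  induction hs : (univ.filter (fun i => g i ≠ 0)).card using Nat.strong_induction_on
    generalizing g with
  | _ s ih =>
    by_cases hall : ∀ M, M ≠ 0 → p ∣ M → (univ.filter (fun i => addOrderOf (g i) = M)).card ≤ p
    · exact ⟨g, h, hg, le_rfl, hall⟩
    push Not at hall
    obtain ⟨M, hM, hpM, hlt⟩ := hall
    set C := univ.filter (fun i => addOrderOf (g i) = M) with hCdef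
    have hC : ∀ i ∈ C, addOrderOf (g i) = M := by simp [hCdef]
    have hMp : p * (M / p) = M := Nat.mul_div_cancel' hpM
    have hMpos : 0 < M / p := Nat.div_pos (Nat.le_of_dvd (Nat.pos_of_ne_zero hM) hpM) hp.pos
    have hex : ∃ T ⊆ C, (M / p) • ∑ i ∈ T, g i = 0 ∧ ∑ i ∈ T, g i ≠ 0 := by
      by_contra hcon
      push Not at hcon
      have := class_small hM hp hpM F (fun x hx => (hF x).2 hx) hFc h C hC hcon
      omega
    -- minimal such T
    obtain ⟨T, ⟨hTC, hT1, hT2⟩, hTmin⟩ : ∃ T, (T ⊆ C ∧ (M / p) • ∑ i ∈ T, g i = 0 ∧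
        ∑ i ∈ T, g i ≠ 0) ∧ ∀ T' ⊂ T, ¬ (T' ⊆ C ∧ (M / p) • ∑ i ∈ T', g i = 0 ∧
        ∑ i ∈ T', g i ≠ 0) := by
      obtain ⟨T, hT⟩ := hex
      obtain ⟨T0, h0, h1⟩ := (Set.toFinite {T : Finset ι | T ⊆ C ∧ (M / p) • ∑ i ∈ T, g i = 0 ∧
        ∑ i ∈ T, g i ≠ 0}).exists_minimal ⟨T, hT⟩
      refine ⟨T0, h0, fun T' hT' hh => ?_⟩
      exact hT'.2 (h1 hh hT'.1)
    have hMg : ∀ i ∈ C, M • g i = 0 := fun i hi => by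
      rw [← hC i hi]; exact addOrderOf_nsmul_eq_zero _
    have hTp : T.card ≤ p := by
      by_contra hgt
      obtain ⟨J, hJ, hJne, hJ0⟩ := davenport (fun i => (M / p) • g i) T F (by
        intro I hI
        rw [hF]
        apply nsmul_sum_zero
        intro i hi
        rw [← mul_nsmul', hMp]
        exact hMg i (hTC (hI hi))) (by omega)
      rw [Finset.sum_nsmul] at hJ0
      have a1 : ∑ i ∈ J, g i = 0 := by
        by_contra hh
        exact hTmin J hJ ⟨hJ.1.trans hTC, hJ0, hh⟩
      have e1 := sum_prefix_diff g hJ.1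
      rw [a1, sub_zero] at e1
      refine hTmin (T \ J) (Finset.sdiff_ssubset hJ.1 hJne)
        ⟨Finset.sdiff_subset.trans hTC, ?_, ?_⟩
      · rw [e1]; exact hT1
      · rw [e1]; exact hT2
    have hTne : T.Nonempty := by
      rw [Finset.nonempty_iff_ne_empty]
      rintro rfl
      simp at hT2
    have hT2c : 2 ≤ T.card := by
      have := hTne.card_pos
      by_contra hh
      obtain ⟨a, rfl⟩ := Finset.card_eq_one.1 (show T.card = 1 by omega)
      simp only [Finset.sum_singleton] at hT1
      have h1 := addOrderOf_dvd_of_nsmul_eq_zero hT1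
      rw [hC a (hTC (by simp))] at h1
      have h2 := Nat.le_of_dvd hMpos h1
      have h3 := Nat.div_lt_self (Nat.pos_of_ne_zero hM) hp.one_lt
      omega
    obtain ⟨t, ht⟩ := hTne
    have hgne : ∀ i ∈ C, g i ≠ 0 := by
      intro i hi h0
      have h1 := hC i hi
      rw [h0, addOrderOf_zero] at h1
      rw [← h1] at hpM
      exact hp.one_lt.ne' (Nat.dvd_one.1 hpM)
    have hm := h.merge T t ht
    set g' : ι → G := (fun k => if k ∈ T then (if k = t then ∑ i ∈ T, g i else 0) else g k) with hg'
    have hlt' : (univ.filter (fun i => g' i ≠ 0)).card < s := by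
      rw [← hs]
      apply Finset.card_lt_card
      obtain ⟨u, hu, hut⟩ := Finset.exists_mem_ne (show 1 < T.card by omega) t
      rw [Finset.ssubset_iff_of_subset]
      · exact ⟨u, by simp [hgne u (hTC hu)], by simp [hg', hu, hut]⟩
      · intro i
        simp only [Finset.mem_filter, Finset.mem_univ, true_and, hg']
        by_cases hi : i ∈ T
        · intro _; exact hgne i (hTC hi)
        · simp [hi]
    have htw : tw g ≤ tw g' := by
      unfold tw
      rw [← Finset.sum_add_sum_compl T, ← Finset.sum_add_sum_compl T (fun i => wt (g' i))]
      have e1 : ∑ i ∈ Tᶜ, wt (g' i) = ∑ i ∈ Tᶜ, wt (g i) := by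
        refine Finset.sum_congr rfl fun i hi => ?_
        rw [Finset.mem_compl] at hi
        simp [hg', hi]
      have e2 : ∑ i ∈ T, wt (g' i) = wt (∑ i ∈ T, g i) := by
        rw [Finset.sum_eq_single t]
        · simp [hg', ht]
        · intro i hi hit
          simp [hg', hi, hit, wt_zero]
        · exact fun hh => absurd ht hh
      have e3 : ∑ i ∈ T, wt (g i) = T.card * (1 / (M : ℝ)) := by
        rw [← nsmul_eq_mul, ← Finset.sum_const]
        refine Finset.sum_congr rfl fun i hi => ?_
        rw [wt, if_neg (hgne i (hTC hi)), hC i (hTC hi)]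
      rw [e1, e2, e3, wt, if_neg hT2]
      have hd := addOrderOf_dvd_of_nsmul_eq_zero hT1
      have hle := Nat.le_of_dvd hMpos hd
      have hpos : 0 < addOrderOf (∑ i ∈ T, g i) := Nat.pos_of_dvd_of_pos hd hMpos
      have : (T.card : ℝ) * (1 / (M : ℝ)) ≤ 1 / (addOrderOf (∑ i ∈ T, g i) : ℝ) := by
        have hM' : (0 : ℝ) < M := by exact_mod_cast Nat.pos_of_ne_zero hM
        have hpos' : (0 : ℝ) < addOrderOf (∑ i ∈ T, g i) := by exact_mod_cast hpos
        rw [mul_one_div, div_le_div_iff₀ hM' hpos', one_mul]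
        have : T.card * addOrderOf (∑ i ∈ T, g i) ≤ M := by
          rw [← hMp]; exact Nat.mul_le_mul hTp hle
        exact_mod_cast this
      linarith
    obtain ⟨g'', a1, a2, a3, a4⟩ := ih _ hlt' g' hm (by
      intro i
      simp only [hg']
      split_ifs
      · exact nsmul_sum_zero _ (fun i _ => hg i)
      · simp
      · exact hg i) rfl
    exact ⟨g'', a1, a2, htw.trans a3, a4⟩

end main
end UF

set_option linter.unusedSectionVars false
namespace UF
section bound
variable {ι G : Type} [Fintype ι] [DecidableEq ι] [AddCommGroup G] [DecidableEq G]

lemma Bd.of_card {p : ℕ} (F : Finset G) (hF : ∀ x : G, x ∈ F ↔ p • x = 0) (hFc : F.card ≤ p) :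
    Bd G p p := by
  intro κ _ _ h hg hk
  refine (hg.card_supp_le F ?_).trans hFc
  intro I
  rw [hF]
  exact nsmul_sum_zero I (fun i _ => hk i)

/-- class counting -/
noncomputable def cl (g : ι → G) (M : ℕ) : ℕ := (univ.filter (fun i => addOrderOf (g i) = M)).card

lemma sum_ite_cl (g : ι → G) (M : ℕ) (c : ℝ) :
    ∑ i, (if addOrderOf (g i) = M then c else 0) = cl g M * c := by
  rw [← Finset.sum_filter, Finset.sum_const, nsmul_eq_mul]; rfl

lemma wt_of_order {x : G} {M : ℕ} (h : addOrderOf x = M) (hM : M ≠ 1) : wt x = 1 / (M : ℝ) := by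
  have : x ≠ 0 := by
    rintro rfl
    rw [addOrderOf_zero] at h
    exact hM h.symm
  rw [wt, if_neg this, h]

lemma wt_nonneg (x : G) : 0 ≤ wt x := by
  unfold wt; split_ifs <;> positivity

/-- indicator term -/
noncomputable def tm (x : G) (M : ℕ) : ℝ := if addOrderOf x = M then 1 / (M : ℝ) else 0

lemma tm_nonneg (x : G) (M : ℕ) : 0 ≤ tm x M := by
  unfold tm; split_ifs <;> positivity

lemma sum_tm (g : ι → G) (M : ℕ) : ∑ i, tm (g i) M = cl g M / M := by
  simp only [tm]
  rw [sum_ite_cl]; ring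

lemma wt_le_p {p m : ℕ} (hp : p.Prime) {x : G} (hx : p ^ m • x = 0) :
    wt x ≤ ∑ k ∈ Finset.range m, tm x (p ^ (k + 1)) := by
  obtain ⟨j, hj, hjo⟩ := (Nat.dvd_prime_pow hp).1 (addOrderOf_dvd_of_nsmul_eq_zero hx)
  cases j with
  | zero =>
    have : x = 0 := by simpa using hjo
    rw [this, wt_zero]
    exact Finset.sum_nonneg fun k _ => tm_nonneg _ _
  | succ k =>
    have h1 : wt x = tm x (p ^ (k + 1)) := by
      rw [wt_of_order hjo (Nat.one_lt_pow (by omega) hp.one_lt).ne', tm, if_pos hjo]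
    rw [h1]
    exact Finset.single_le_sum (f := fun k => tm x (p ^ (k + 1)))
      (fun k _ => tm_nonneg _ _) (by simp; omega)

lemma order_cases {p m : ℕ} (hp : p.Prime) {x : G} (hx : (3 * p ^ m) • x = 0) :
    ∃ j ≤ m, addOrderOf x = p ^ j ∨ addOrderOf x = 3 * p ^ j := by
  obtain ⟨a, b, ha, hb, hab⟩ := Nat.dvd_mul.1 (addOrderOf_dvd_of_nsmul_eq_zero hx)
  obtain ⟨j, hj, rfl⟩ := (Nat.dvd_prime_pow hp).1 hb
  rcases (Nat.dvd_prime (by norm_num)).1 ha with rfl | rfl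
  · exact ⟨j, hj, Or.inl (by rw [← hab, one_mul])⟩
  · exact ⟨j, hj, Or.inr (by rw [← hab])⟩

lemma wt_le_3p {p m : ℕ} (hp : p.Prime) {x : G} (hx : (3 * p ^ m) • x = 0) :
    wt x ≤ tm x 3 + (∑ k ∈ Finset.range m, tm x (p ^ (k + 1)) +
      ∑ k ∈ Finset.range m, tm x (3 * p ^ (k + 1))) := by
  have n1 : 0 ≤ tm x 3 := tm_nonneg _ _
  have n2 : 0 ≤ ∑ k ∈ Finset.range m, tm x (p ^ (k + 1)) :=
    Finset.sum_nonneg fun k _ => tm_nonneg _ _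
  have n3 : 0 ≤ ∑ k ∈ Finset.range m, tm x (3 * p ^ (k + 1)) :=
    Finset.sum_nonneg fun k _ => tm_nonneg _ _
  obtain ⟨j, hj, ho | ho⟩ := order_cases hp hx
  · have : p ^ m • x = 0 := by
      apply addOrderOf_dvd_iff_nsmul_eq_zero.1
      rw [ho]; exact pow_dvd_pow p hj
    have := wt_le_p hp this
    linarith
  · cases j with
    | zero =>
      have ho' : addOrderOf x = 3 := by simpa using ho
      have h1 : wt x = tm x 3 := by
        rw [wt_of_order ho' (by norm_num), tm, if_pos ho']
      linarith
    | succ k =>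
      have h1 : wt x = tm x (3 * p ^ (k + 1)) := by
        rw [wt_of_order ho, tm, if_pos ho]
        have : 0 < p ^ (k + 1) := pow_pos hp.pos _
        omega
      have := Finset.single_le_sum (f := fun k => tm x (3 * p ^ (k + 1))) (s := Finset.range m)
        (fun k _ => tm_nonneg _ _) (show k ∈ Finset.range m by simp; omega)
      linarith

lemma bound_p {p m : ℕ} (hp : p.Prime) (F : Finset G) (hF : ∀ x : G, x ∈ F ↔ p • x = 0)
    (hFc : F.card ≤ p) (g : ι → G) (h : Good g) (hg : ∀ i, p ^ m • g i = 0) :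
    tw g ≤ ∑ k ∈ Finset.range m, (1 : ℝ) / (p : ℝ) ^ k := by
  obtain ⟨g', -, h2, h3, h4⟩ := reduce hp F hF hFc g h hg
  refine h3.trans ?_
  have hp0 : (0 : ℝ) < p := by exact_mod_cast hp.pos
  calc tw g' ≤ ∑ i, ∑ k ∈ Finset.range m, tm (g' i) (p ^ (k + 1)) :=
        Finset.sum_le_sum fun i _ => wt_le_p hp (h2 i)
    _ = ∑ k ∈ Finset.range m, (cl g' (p ^ (k + 1)) : ℝ) / (p ^ (k + 1) : ℕ) := by
        rw [Finset.sum_comm]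
        exact Finset.sum_congr rfl fun k _ => sum_tm _ _
    _ ≤ _ := by
        refine Finset.sum_le_sum fun k _ => ?_
        have hc : cl g' (p ^ (k + 1)) ≤ p := h4 _ (pow_ne_zero _ hp.ne_zero)
          (dvd_pow_self p (by omega))
        have hc' : (cl g' (p ^ (k + 1)) : ℝ) ≤ p := by exact_mod_cast hc
        push_cast
        rw [div_le_div_iff₀ (by positivity) (by positivity), pow_succ (p : ℝ) k]
        have : (0 : ℝ) < p ^ k := by positivity
        nlinarith

lemma order_nsmul {x : G} {q M : ℕ} (hq : q ≠ 0) (hM : M ≠ 0) (h : addOrderOf x = q * M) :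
    addOrderOf (q • x) = M := by
  rw [addOrderOf_nsmul' x hq, h, Nat.gcd_eq_right (Dvd.intro _ rfl),
    Nat.mul_div_cancel_left _ (Nat.pos_of_ne_zero hq)]

lemma order_nsmul_coprime {x : G} {q M : ℕ} (hq : q ≠ 0) (h : addOrderOf x = M)
    (hc : Nat.Coprime M q) : addOrderOf (q • x) = M := by
  rw [addOrderOf_nsmul' x hq, h, hc, Nat.div_one]

lemma geom_le {p : ℕ} (hp : p.Prime) (m : ℕ) :
    ∑ k ∈ Finset.range m, (1 : ℝ) / (p : ℝ) ^ k ≤ 1 + 3 / p := by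
  have hp2 : (2 : ℝ) ≤ p := by exact_mod_cast hp.two_le
  have key : ∑ k ∈ Finset.range m, (1 : ℝ) / (p : ℝ) ^ k =
      (p / (p - 1)) * (1 - 1 / (p : ℝ) ^ m) := by
    induction m with
    | zero => simp
    | succ m ih =>
      rw [Finset.sum_range_succ, ih, pow_succ]
      have : (p : ℝ) - 1 ≠ 0 := by linarith
      field_simp
      ring
  rw [key]
  have h1 : (p : ℝ) / (p - 1) ≤ 1 + 3 / p := by
    rw [div_le_iff₀ (by linarith)]
    have : (1 + 3 / (p : ℝ)) * (p - 1) = p + (2 - 3 / p) := by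
      field_simp; ring
    rw [this]
    have : 3 / (p : ℝ) ≤ 3 / 2 := by
      apply div_le_div_of_nonneg_left <;> linarith
    linarith
  have h2 : (0 : ℝ) ≤ p / (p - 1) := div_nonneg (by linarith) (by linarith)
  have h3 : (0 : ℝ) ≤ 1 / (p : ℝ) ^ m := by positivity
  nlinarith

lemma cl_eq_prime (g : ι → G) {q : ℕ} (hq : q.Prime) :
    (univ.filter (fun i => q • g i = 0 ∧ g i ≠ 0)) = univ.filter (fun i => addOrderOf (g i) = q) := by
  ext i
  have : Fact q.Prime := ⟨hq⟩
  simp only [Finset.mem_filter, Finset.mem_univ, true_and]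
  constructor
  · rintro ⟨h1, h2⟩; exact addOrderOf_eq_prime h1 h2
  · intro h
    refine ⟨by rw [← h]; exact addOrderOf_nsmul_eq_zero _, ?_⟩
    intro h0
    rw [h0, addOrderOf_zero] at h
    exact hq.one_lt.ne h

lemma wt_step {p m : ℕ} (hp : p.Prime) (hp3 : p ≠ 3) {x : G} (hx : (3 * p ^ m) • x = 0) :
    wt x ≤ tm x p + (1 - 1 / p) * tm x 3 + (1 / p) * wt (p • x) := by
  have hp1 : (1 : ℝ) < p := by exact_mod_cast hp.one_lt
  have n1 : 0 ≤ tm x 3 := tm_nonneg _ _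
  have n2 : 0 ≤ tm x p := tm_nonneg _ _
  have n3 : 0 ≤ wt (p • x) := wt_nonneg _
  have n4 : (1 : ℝ) / p ≤ 1 := by rw [div_le_one (by linarith)]; exact hp1.le
  have n5 : (0 : ℝ) ≤ 1 / p := by positivity
  have n6 : 0 ≤ (1 - 1 / (p : ℝ)) * tm x 3 := mul_nonneg (by linarith) n1
  have n7 : 0 ≤ 1 / (p : ℝ) * wt (p • x) := mul_nonneg n5 n3
  have big : ∀ M : ℕ, M ≠ 0 → M ≠ 1 → addOrderOf x = p * M → wt x ≤ (1 / p) * wt (p • x) := by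
    intro M hM0 hM1 ho
    have h1 := order_nsmul hp.ne_zero hM0 ho
    rw [wt_of_order h1 hM1, wt_of_order ho]
    · push_cast
      apply le_of_eq
      field_simp
    · intro hh
      exact hp.one_lt.ne' (Nat.eq_one_of_mul_eq_one_right hh)
  obtain ⟨j, hj, ho | ho⟩ := order_cases hp hx
  · rcases j with _ | _ | j
    · have : x = 0 := by simpa using ho
      have h0 : wt x = 0 := by rw [this, wt_zero]
      linarith
    · have ho' : addOrderOf x = p := by simpa using ho
      have h1 : wt x = tm x p := by
        rw [wt_of_order ho' hp.one_lt.ne', tm, if_pos ho']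
      linarith
    · have := big (p ^ (j + 1)) (pow_ne_zero _ hp.ne_zero)
        (Nat.one_lt_pow (by omega) hp.one_lt).ne' (by rw [ho]; ring)
      linarith
  · rcases j with _ | j
    · have ho' : addOrderOf x = 3 := by simpa using ho
      have h1 : wt x = tm x 3 := by
        rw [wt_of_order ho' (by norm_num), tm, if_pos ho']
      have h2 : wt (p • x) = tm x 3 := by
        rw [wt_of_order (order_nsmul_coprime hp.ne_zero ho' ?_) (by norm_num), tm, if_pos ho']
        exact (Nat.coprime_primes (by norm_num) hp).2 (Ne.symm hp3)
      rw [h1, h2]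
      linarith
    · have : 0 < p ^ j := pow_pos hp.pos _
      have := big (3 * p ^ j) (by omega) (by omega) (by rw [ho]; ring)
      linarith

lemma wt_step3 {p m : ℕ} (hp : p.Prime) (hp3 : p ≠ 3) {x : G} (hx : (3 * p ^ m) • x = 0) :
    wt x ≤ tm x 3 + wt (3 • x) := by
  have n1 : 0 ≤ tm x 3 := tm_nonneg _ _
  have n3 : 0 ≤ wt (3 • x) := wt_nonneg _
  obtain ⟨j, hj, ho | ho⟩ := order_cases hp hx
  · rcases j with _ | j
    · have : x = 0 := by simpa using ho
      have h0 : wt x = 0 := by rw [this, wt_zero]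
      linarith
    · have h1 : p ^ (j + 1) ≠ 1 := (Nat.one_lt_pow (by omega) hp.one_lt).ne'
      have h2 : wt (3 • x) = wt x := by
        rw [wt_of_order (order_nsmul_coprime (by norm_num) ho ?_) h1, wt_of_order ho h1]
        exact Nat.Coprime.pow_left _ ((Nat.coprime_primes hp (by norm_num)).2 hp3)
      linarith
  · rcases j with _ | j
    · have ho' : addOrderOf x = 3 := by simpa using ho
      have h1 : wt x = tm x 3 := by
        rw [wt_of_order ho' (by norm_num), tm, if_pos ho']
      linarith
    · have h1 : p ^ (j + 1) ≠ 1 := (Nat.one_lt_pow (by omega) hp.one_lt).ne'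
      have h0 : 0 < p ^ (j + 1) := pow_pos hp.pos _
      have h2 : wt x ≤ wt (3 • x) := by
        rw [wt_of_order (order_nsmul (by norm_num) h0.ne' ho) h1, wt_of_order ho (by omega)]
        apply one_div_le_one_div_of_le
        · exact_mod_cast h0
        · push_cast
          have : (0 : ℝ) < (p : ℝ) ^ (j + 1) := by exact_mod_cast h0
          linarith
      linarith

theorem bound_main {p n : ℕ} (hp : p.Prime) (hp3 : p ≠ 3) (F : Finset G)
    (hF : ∀ x : G, x ∈ F ↔ p • x = 0) (hFc : F.card ≤ p) (h3 : Bd G 3 (3 * n)) (m : ℕ)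
    (g : ι → G) (h : Good g) (hg : ∀ i, (3 * p ^ m) • g i = 0) :
    tw g ≤ ∑ k ∈ Finset.range m, (1 : ℝ) / (p : ℝ) ^ k + n := by
  have hp1 : (1 : ℝ) < p := by exact_mod_cast hp.one_lt
  have hcl3 : ∀ g : ι → G, Good g → (cl g 3 : ℝ) ≤ 3 * n := by
    intro g h
    have := h3.count h
    rw [cl_eq_prime g (by norm_num)] at this
    exact_mod_cast this
  induction m generalizing g with
  | zero =>
    have : tw g ≤ ∑ i, tm (g i) 3 := by
      refine Finset.sum_le_sum fun i _ => ?_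
      simpa using wt_le_3p (m := 0) hp (hg i)
    rw [sum_tm] at this
    have := hcl3 g h
    simp
    push_cast at *
    linarith
  | succ m ih =>
    obtain ⟨g', hG, h2, htw, h4⟩ := reduce hp F hF hFc g h hg
    refine htw.trans ?_
    have hc3 := hcl3 g' hG
    have hbp := Bd.of_card F hF hFc
    have hcp : cl g' p ≤ p := by
      have := hbp.count hG
      rwa [cl_eq_prime g' hp] at this
    have hcp' : (cl g' p : ℝ) ≤ p := by exact_mod_cast hcp
    have hS : ∑ k ∈ Finset.range (m + 1), (1 : ℝ) / (p : ℝ) ^ k =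
        1 + 1 / p * ∑ k ∈ Finset.range m, (1 : ℝ) / (p : ℝ) ^ k := by
      rw [Finset.sum_range_succ', Finset.mul_sum, add_comm]
      congr 1
      · simp
      · refine Finset.sum_congr rfl fun k _ => ?_
        rw [pow_succ]; field_simp
    by_cases hA : p ≤ cl g' p
    · have hq : Good (fun i => p • g' i) := by
        apply hbp.cover hG
        rw [cl_eq_prime g' hp]; exact hA
      have hih := ih _ hq (by
        intro i
        rw [← mul_nsmul', show 3 * p ^ m * p = 3 * p ^ (m + 1) by ring]
        exact h2 i)
      have hle : tw g' ≤ ∑ i, (tm (g' i) p + (1 - 1 / p) * tm (g' i) 3 + (1 / p) * wt (p • g' i)) :=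
        Finset.sum_le_sum fun i _ => wt_step hp hp3 (h2 i)
      rw [Finset.sum_add_distrib, Finset.sum_add_distrib, ← Finset.mul_sum, ← Finset.mul_sum,
        sum_tm, sum_tm] at hle
      change tw g' ≤ _ + _ + 1 / (p : ℝ) * tw (fun i => p • g' i) at hle
      rw [hS]
      have e1 : (cl g' p : ℝ) / p ≤ 1 := by rw [div_le_one (by linarith)]; exact hcp'
      have e2 : (1 - 1 / (p : ℝ)) * ((cl g' 3 : ℝ) / (3 : ℕ)) ≤ (1 - 1 / (p : ℝ)) * n := by
        apply mul_le_mul_of_nonneg_left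
        · push_cast; linarith
        · have : (1 : ℝ) / p ≤ 1 := by rw [div_le_one (by linarith)]; exact hp1.le
          linarith
      have e3 : 1 / (p : ℝ) * tw (fun i => p • g' i) ≤
          1 / (p : ℝ) * (∑ k ∈ Finset.range m, (1 : ℝ) / (p : ℝ) ^ k + n) :=
        mul_le_mul_of_nonneg_left hih (by positivity)
      nlinarith
    by_cases hB : 3 * n ≤ cl g' 3
    · have hq : Good (fun i => 3 • g' i) := by
        apply h3.cover hG
        rw [cl_eq_prime g' (by norm_num)]; exact hB
      have hb := bound_p (m := m + 1) hp F hF hFc _ hq (by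
        intro i
        rw [← mul_nsmul', mul_comm]
        exact h2 i)
      have hle : tw g' ≤ ∑ i, (tm (g' i) 3 + wt (3 • g' i)) :=
        Finset.sum_le_sum fun i _ => wt_step3 hp hp3 (h2 i)
      rw [Finset.sum_add_distrib, sum_tm] at hle
      change tw g' ≤ _ + tw (fun i => 3 • g' i) at hle
      push_cast at hle
      linarith
    · have hA' : (cl g' p : ℝ) ≤ p - 1 := by
        have : cl g' p + 1 ≤ p := by omega
        have : (cl g' p : ℝ) + 1 ≤ p := by exact_mod_cast this
        linarith
      have hB' : (cl g' 3 : ℝ) ≤ 3 * n - 1 := by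
        have : cl g' 3 + 1 ≤ 3 * n := by omega
        have : (cl g' 3 : ℝ) + 1 ≤ 3 * n := by exact_mod_cast this
        linarith
      have hle : tw g' ≤ ∑ i, (tm (g' i) 3 + (∑ k ∈ Finset.range (m + 1), tm (g' i) (p ^ (k + 1)) +
          ∑ k ∈ Finset.range (m + 1), tm (g' i) (3 * p ^ (k + 1)))) :=
        Finset.sum_le_sum fun i _ => wt_le_3p hp (h2 i)
      rw [Finset.sum_add_distrib, Finset.sum_add_distrib, sum_tm, Finset.sum_comm,
        Finset.sum_comm (f := fun i k => tm (g' i) (3 * p ^ (k + 1)))] at hle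
      simp only [sum_tm] at hle
      have e1 : ∑ k ∈ Finset.range (m + 1), (cl g' (p ^ (k + 1)) : ℝ) / (p ^ (k + 1) : ℕ) ≤
          ∑ k ∈ Finset.range (m + 1), (1 : ℝ) / (p : ℝ) ^ k - 1 / p := by
        rw [Finset.sum_range_succ', Finset.sum_range_succ' (fun k => (1 : ℝ) / (p : ℝ) ^ k)]
        have a1 : ∑ k ∈ Finset.range m, (cl g' (p ^ (k + 1 + 1)) : ℝ) / (p ^ (k + 1 + 1) : ℕ) ≤
          ∑ k ∈ Finset.range m, (1 : ℝ) / (p : ℝ) ^ (k + 1) := by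
          refine Finset.sum_le_sum fun k _ => ?_
          have hc : cl g' (p ^ (k + 1 + 1)) ≤ p := h4 _ (pow_ne_zero _ hp.ne_zero)
            (dvd_pow_self p (by omega))
          have hc' : (cl g' (p ^ (k + 1 + 1)) : ℝ) ≤ p := by exact_mod_cast hc
          push_cast
          rw [div_le_div_iff₀ (by positivity) (by positivity), pow_succ (p : ℝ) (k + 1)]
          have : (0 : ℝ) < p ^ (k + 1) := by positivity
          nlinarith
        have a2 : (cl g' (p ^ (0 + 1)) : ℝ) / (p ^ (0 + 1) : ℕ) ≤ 1 - 1 / p := by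
          simp only [zero_add, pow_one]
          rw [div_le_iff₀ (by linarith), sub_mul, one_mul, one_div_mul_cancel (by linarith)]
          exact hA'
        simp only [pow_zero] at *
        linarith
      have e2 : ∑ k ∈ Finset.range (m + 1), (cl g' (3 * p ^ (k + 1)) : ℝ) / (3 * p ^ (k + 1) : ℕ) ≤
          (1 / 3) * ∑ k ∈ Finset.range (m + 1), (1 : ℝ) / (p : ℝ) ^ k := by
        rw [Finset.mul_sum]
        refine Finset.sum_le_sum fun k _ => ?_
        have hc : cl g' (3 * p ^ (k + 1)) ≤ p := h4 _
          (mul_ne_zero (by norm_num) (pow_ne_zero _ hp.ne_zero))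
          (Dvd.dvd.mul_left (dvd_pow_self p (by omega)) 3)
        have hc' : (cl g' (3 * p ^ (k + 1)) : ℝ) ≤ p := by exact_mod_cast hc
        push_cast
        have h0 : (0 : ℝ) < p ^ k := by positivity
        rw [← mul_div_assoc, mul_one, div_div, div_le_div_iff₀ (by positivity) (by positivity),
          pow_succ (p : ℝ) k]
        nlinarith
      have e3 := geom_le hp (m + 1)
      have e4 : (3 : ℝ) / p = 3 * (1 / p) := by ring
      push_cast at hle e1 e2
      linarith

end bound
end UF

namespace UF
section ufim
variable {ι G : Type} [Fintype ι] [DecidableEq ι] [AddCommGroup G]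

/-- A family partitioned in zero-sum blocks such that zero-sum sets are unions of blocks. -/
lemma Good.of_blocks {β : Type} [DecidableEq β] [Fintype β] (g : ι → G) (b : ι → β)
    (h0 : ∀ k, ∑ i with b i = k, g i = 0)
    (hs : ∀ I : Finset ι, ∑ i ∈ I, g i = 0 → ∀ i j, b i = b j → i ∈ I → j ∈ I) : Good g := by
  have key : ∀ X : Finset ι, (∀ i j, b i = b j → i ∈ X → j ∈ X) → ∑ i ∈ X, g i = 0 := by
    intro X hX
    rw [← Finset.sum_fiberwise X b g]
    refine Finset.sum_eq_zero fun k _ => ?_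
    by_cases hk : ∃ i ∈ X, b i = k
    · obtain ⟨i, hi, rfl⟩ := hk
      rw [← h0 (b i)]
      refine Finset.sum_congr ?_ fun _ _ => rfl
      ext j
      simp only [Finset.mem_filter, Finset.mem_univ, true_and]
      exact ⟨fun h => h.2, fun h => ⟨hX i j h.symm hi, h⟩⟩
    · apply Finset.sum_eq_zero
      intro i hi
      rw [Finset.mem_filter] at hi
      exact absurd ⟨i, hi.1, hi.2⟩ hk
  refine ⟨key univ (by simp), fun I J hI hJ => key _ ?_⟩
  intro i j hij hi
  rw [Finset.mem_inter] at hi ⊢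
  exact ⟨hs I hI i j hij hi.1, hs J hJ i j hij hi.2⟩

variable {ℓ : ℕ}

lemma exists_factor (g : Fin ℓ → G) (U : Finset (Fin ℓ)) (hU : ∑ i ∈ U, g i = 0) :
    ∀ (W : Finset (Fin ℓ)) (P : Finpartition W), Disjoint W U → (∀ A ∈ P.parts, IsMinZeroSum g A) →
    ∃ Q : Finpartition (W ∪ U), (∀ A ∈ Q.parts, IsMinZeroSum g A) ∧
      ∀ A ∈ Q.parts, A ∈ P.parts ∨ A ⊆ U := by
  induction U using Finset.strongInduction with
  | H U ih =>
    intro W P hd hP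
    rcases U.eq_empty_or_nonempty with rfl | hne
    · rw [Finset.union_empty]
      exact ⟨P, hP, fun A hA => Or.inl hA⟩
    · obtain ⟨S, hSU, hSn, hS0, hSm⟩ := exists_min g U hU hne
      have hd' : Disjoint W S := Finset.disjoint_of_subset_right hSU hd
      have hs0 : ∑ i ∈ U \ S, g i = 0 := by
        have := Finset.sum_sdiff (f := g) hSU
        rw [hS0, hU, add_zero] at this
        exact this
      obtain ⟨Q, hQ1, hQ2⟩ := ih (U \ S) (Finset.sdiff_ssubset hSU hSn) hs0 (W ∪ S)
        (P.extend (b := S) (c := W ∪ S) hSn.ne_empty hd' rfl)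
        (by
          rw [Finset.disjoint_union_left]
          exact ⟨Finset.disjoint_of_subset_right Finset.sdiff_subset hd, Finset.disjoint_sdiff⟩)
        (by
          intro A hA
          rcases Finset.mem_insert.1 hA with rfl | hA
          · exact ⟨hSn, hS0, hSm⟩
          · exact hP A hA)
      have he : W ∪ S ∪ (U \ S) = W ∪ U := by
        rw [Finset.union_assoc, Finset.union_sdiff_of_subset hSU]
      refine ⟨Q.copy he, fun A hA => hQ1 A hA, fun A hA => ?_⟩
      rcases hQ2 A hA with hA | hA
      · rcases Finset.mem_insert.1 hA with rfl | hA
        · exact Or.inr hSU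
        · exact Or.inl hA
      · exact Or.inr (hA.trans Finset.sdiff_subset)

lemma IsUFIM.good {g : Fin ℓ → G} (h : IsUFIM g) : Good g := by
  obtain ⟨-, P, hP, huniq⟩ := h
  have hfib : ∀ A ∈ P.parts, univ.filter (fun i => P.part i = A) = A := by
    intro A hA
    ext i
    simp [P.part_eq_iff_mem hA]
  have hz : ∀ k, ∑ i with P.part i = k, g i = 0 := by
    intro k
    by_cases hk : k ∈ P.parts
    · rw [hfib k hk]; exact (hP k hk).2.1
    · rw [Finset.filter_false_of_mem, Finset.sum_empty]
      rintro i - rfl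
      exact hk (P.part_mem.2 (Finset.mem_univ i))
  have htot : ∑ i, g i = 0 := by
    rw [← Finset.sum_fiberwise univ P.part g]
    exact Finset.sum_eq_zero fun k _ => hz k
  refine Good.of_blocks g P.part hz ?_
  intro I hI i j hij hi
  obtain ⟨Q, hQ1, hQ2⟩ := exists_factor g I hI ∅ (Finpartition.empty _) (by simp) (by simp)
  obtain ⟨R, hR1, hR2⟩ := exists_factor g Iᶜ (by rw [sum_compl_eq htot, hI, neg_zero]) (∅ ∪ I) Q
    (by rw [Finset.empty_union]; exact disjoint_compl_right) hQ1
  have he : ∅ ∪ I ∪ Iᶜ = univ := by simp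
  have hRP : ∀ A ∈ P.parts, A ⊆ I ∨ A ⊆ Iᶜ := by
    have : R.copy he = P := huniq _ (by intro A hA; exact hR1 A hA)
    intro A hA
    rw [← this] at hA
    rcases hR2 A hA with hA | hA
    · rcases hQ2 A hA with hA | hA
      · simp at hA
      · exact Or.inl hA
    · exact Or.inr hA
  have hj : j ∈ P.part i := by rw [hij]; exact P.mem_part_self.2 (Finset.mem_univ j)
  have hi' : i ∈ P.part i := P.mem_part_self.2 (Finset.mem_univ i)
  rcases hRP (P.part i) (P.part_mem.2 (Finset.mem_univ i)) with hA | hA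
  · exact hA hj
  · exact absurd hi (by simpa using hA hi')

lemma Good.isUFIM {g : Fin ℓ → G} (h : Good g) (hnz : ∀ i, g i ≠ 0) : IsUFIM g := by
  obtain ⟨Q, hQ1, -⟩ := exists_factor g univ h.1 ∅ (Finpartition.empty _) (by simp) (by simp)
  have he : (∅ : Finset (Fin ℓ)) ∪ univ = univ := by simp
  have sub : ∀ P P' : Finpartition (univ : Finset (Fin ℓ)), IsFactorization g P →
      IsFactorization g P' → P.parts ⊆ P'.parts := by
    intro P P' hP hP' A hA
    obtain ⟨hAn, hA0, hAm⟩ := hP A hA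
    obtain ⟨i, hi⟩ := hAn
    obtain ⟨B, hB, hiB⟩ := P'.exists_mem (Finset.mem_univ i)
    obtain ⟨-, hB0, hBm⟩ := hP' B hB
    have h0 := h.2 A B hA0 hB0
    have hne : (A ∩ B).Nonempty := ⟨i, Finset.mem_inter.2 ⟨hi, hiB⟩⟩
    have e1 : A ∩ B = A := by
      by_contra hh
      exact hAm _ (Finset.inter_subset_left.ssubset_of_ne hh) hne h0
    have e2 : A ∩ B = B := by
      by_contra hh
      exact hBm _ (Finset.inter_subset_right.ssubset_of_ne hh) hne h0
    rw [← e1, e2]; exact hB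
  refine ⟨hnz, Q.copy he, fun A hA => hQ1 A hA, fun P hP => ?_⟩
  have hQ : IsFactorization g (Q.copy he) := fun A hA => hQ1 A hA
  exact Finpartition.ext (Finset.Subset.antisymm (sub _ _ hP hQ) (sub _ _ hQ hP))

lemma crossNum_eq [DecidableEq G] {g : Fin ℓ → G} (hnz : ∀ i, g i ≠ 0) : crossNum g = tw g := by
  unfold crossNum tw wt
  exact Finset.sum_congr rfl fun i _ => by rw [if_neg (hnz i)]

end ufim
end UF

namespace UF
section grp
variable {p m n : ℕ}

abbrev GG (p m n : ℕ) : Type := ZMod (p ^ m) × (Fin n → ZMod 3)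

lemma eq_zero_of_coprime {A : Type} [AddCommGroup A] {x : A} {a b : ℕ} (ha : a • x = 0)
    (hb : b • x = 0) (h : Nat.Coprime a b) : x = 0 := by
  rw [← AddMonoid.addOrderOf_eq_one_iff]
  exact Nat.eq_one_of_dvd_coprimes h (addOrderOf_dvd_of_nsmul_eq_zero ha)
    (addOrderOf_dvd_of_nsmul_eq_zero hb)

lemma fst_tors (x : ZMod (p ^ m)) : p ^ m • x = 0 := by
  rw [nsmul_eq_mul, ZMod.natCast_self, zero_mul]

lemma snd_tors (x : Fin n → ZMod 3) : 3 • x = 0 := by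
  ext i
  have : ((3 : ℕ) : ZMod 3) = 0 := ZMod.natCast_self 3
  simp only [Pi.smul_apply, Pi.zero_apply]
  rw [nsmul_eq_mul, this, zero_mul]

lemma tors (x : GG p m n) : (3 * p ^ m) • x = 0 := by
  ext1
  · simp only [Prod.smul_fst, Prod.fst_zero]
    rw [mul_nsmul', fst_tors, nsmul_zero]
  · simp only [Prod.smul_snd, Prod.snd_zero]
    rw [mul_nsmul, snd_tors, nsmul_zero]

lemma bd3 (hp : p.Prime) (hp3 : p ≠ 3) : Bd (GG p m n) 3 (3 * n) := by
  intro κ _ _ h hg hk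
  have hc : Nat.Coprime 3 (p ^ m) :=
    Nat.Coprime.pow_right _ ((Nat.coprime_primes (by norm_num) hp).2 hp3.symm)
  have h1 : ∀ i, (h i).1 = 0 := by
    intro i
    refine eq_zero_of_coprime (a := 3) (b := p ^ m) ?_ (fst_tors _) hc
    rw [← Prod.smul_fst, hk i]; rfl
  have hs : ∀ I : Finset κ, ∑ i ∈ I, h i = 0 ↔ ∑ i ∈ I, (h i).2 = 0 := by
    intro I
    rw [Prod.ext_iff, Prod.fst_sum, Prod.snd_sum]
    simp [h1]
  have hg2 : Good (fun i => (h i).2) :=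
    ⟨(hs _).1 hg.1, fun I J hI hJ => (hs _).1 (hg.2 I J ((hs _).2 hI) ((hs _).2 hJ))⟩
  have := hg2.card_three
  refine le_trans (le_of_eq ?_) this
  congr 1
  ext i
  simp only [Finset.mem_filter, Finset.mem_univ, true_and]
  rw [ne_eq, ne_eq, Prod.ext_iff]
  simp [h1]

lemma upper (hp : p.Prime) (hp3 : p ≠ 3) {ℓ : ℕ} (g : Fin ℓ → GG p m n) (h : IsUFIM g) :
    crossNum g ≤ ∑ k ∈ Finset.range m, (1 : ℝ) / (p : ℝ) ^ k + n := by
  have : NeZero (p ^ m) := ⟨pow_ne_zero _ hp.ne_zero⟩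
  rw [crossNum_eq h.1]
  refine bound_main hp hp3 (univ.filter (fun x : GG p m n => p • x = 0)) (by simp) ?_
    (bd3 hp hp3) m g (IsUFIM.good h) (fun i => tors _)
  have hcy := IsAddCyclic.card_nsmul_eq_zero_le (α := ZMod (p ^ m)) hp.pos
  refine le_trans (Finset.card_le_card_of_injOn Prod.fst ?_ ?_) hcy
  · intro x hx
    simp only [Finset.coe_filter, Finset.mem_univ, true_and, Set.mem_setOf_eq] at hx ⊢
    rw [← Prod.smul_fst, hx]; rfl
  · have hz : ∀ x : GG p m n, p • x = 0 → x.2 = 0 := by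
      intro x hx
      refine eq_zero_of_coprime (a := p) (b := 3) ?_ (snd_tors _)
        ((Nat.coprime_primes hp (by norm_num)).2 hp3)
      rw [← Prod.smul_snd, hx]; rfl
    intro x hx y hy hxy
    simp only [Finset.coe_filter, Finset.mem_univ, true_and, Set.mem_setOf_eq] at hx hy
    exact Prod.ext hxy (by rw [hz x hx, hz y hy])

end grp
end UF

namespace UF
section lower
variable {p m n : ℕ}

lemma digits (hp : 0 < p) : ∀ (m : ℕ) (d : Fin m → ℤ), (∀ k, |d k| < p) →
    (p : ℤ) ^ m ∣ ∑ k, d k * (p : ℤ) ^ (k : ℕ) → ∀ k, d k = 0 := by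
  intro m
  induction m with
  | zero => intro d _ _ k; exact k.elim0
  | succ m ih =>
    intro d hd hdvd
    have hsum : ∑ k : Fin (m + 1), d k * (p : ℤ) ^ (k : ℕ) =
        d 0 + p * ∑ k : Fin m, d k.succ * (p : ℤ) ^ (k : ℕ) := by
      rw [Fin.sum_univ_succ, Finset.mul_sum]
      congr 1
      · simp
      · refine Finset.sum_congr rfl fun k _ => ?_
        rw [Fin.val_succ, pow_succ]; ring
    rw [hsum] at hdvd
    have h0 : d 0 = 0 := by
      apply Int.eq_zero_of_abs_lt_dvd _ (hd 0)
      have : (p : ℤ) ∣ d 0 + p * ∑ k : Fin m, d k.succ * (p : ℤ) ^ (k : ℕ) :=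
        (dvd_pow_self _ (by omega)).trans hdvd
      exact (Int.dvd_add_left (dvd_mul_right _ _)).1 this
    rw [h0, zero_add, pow_succ'] at hdvd
    have h1 := ih (fun k => d k.succ) (fun k => hd _)
      (Int.dvd_of_mul_dvd_mul_left (by exact_mod_cast hp.ne') hdvd)
    intro k
    refine Fin.cases h0 h1 k

/-- coefficients of the extremal blocks -/
def cf (p : ℕ) (j : Fin p) : ℤ := if (j : ℕ) = 0 then 1 - p else 1

lemma sum_cf (hp : 0 < p) (X : Finset (Fin p)) :
    ∑ j ∈ X, cf p j = X.card - if (⟨0, hp⟩ : Fin p) ∈ X then (p : ℤ) else 0 := by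
  have : ∀ j : Fin p, cf p j = 1 - if j = ⟨0, hp⟩ then (p : ℤ) else 0 := by
    intro j
    unfold cf
    by_cases h : j = ⟨0, hp⟩
    · subst h; simp
    · have : (j : ℕ) ≠ 0 := fun hh => h (Fin.ext hh)
      simp [h, this]
  simp only [this]
  rw [Finset.sum_sub_distrib, Finset.sum_ite_eq']
  simp

lemma cf_facts (hp : 0 < p) (X : Finset (Fin p)) :
    |∑ j ∈ X, cf p j| < p ∧ (∑ j ∈ X, cf p j = 0 ↔ X = ∅ ∨ X = univ) := by
  rw [sum_cf hp]
  have hle : X.card ≤ p := by simpa using Finset.card_le_univ X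
  have hu : X = univ ↔ X.card = p := by
    rw [← Finset.card_eq_iff_eq_univ, Fintype.card_fin]
  split_ifs with h
  · have : 0 < X.card := Finset.card_pos.2 ⟨_, h⟩
    have hne : X ≠ ∅ := Finset.ne_empty_of_mem h
    refine ⟨by rw [abs_lt]; constructor <;> omega, ?_⟩
    rw [hu]
    simp only [hne, false_or]
    omega
  · have : X.card ≠ p := fun hh => h (by rw [hu.2 hh]; simp)
    refine ⟨by rw [abs_lt]; constructor <;> omega, ?_⟩
    rw [hu, ← Finset.card_eq_zero]
    omega

lemma three_facts (Y : Finset (Fin 3)) : ((Y.card : ZMod 3) = 0 ↔ Y = ∅ ∨ Y = univ) := by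
  revert Y; decide

abbrev Ix (p m n : ℕ) : Type := (Fin m × Fin p) ⊕ (Fin n × Fin 3)

/-- the extremal family -/
def gg (p m n : ℕ) : Ix p m n → GG p m n
  | Sum.inl (k, j) => (((cf p j * (p : ℤ) ^ (k : ℕ) : ℤ) : ZMod (p ^ m)), 0)
  | Sum.inr (a, _) => (0, Pi.single a 1)

def bX (I : Finset (Ix p m n)) (k : Fin m) : Finset (Fin p) :=
  univ.filter (fun j => Sum.inl (k, j) ∈ I)

def bY (I : Finset (Ix p m n)) (a : Fin n) : Finset (Fin 3) :=
  univ.filter (fun j => Sum.inr (a, j) ∈ I)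

lemma sum_gg_fst (I : Finset (Ix p m n)) : (∑ x ∈ I, gg p m n x).1 =
    ((∑ k : Fin m, (∑ j ∈ bX I k, cf p j) * (p : ℤ) ^ (k : ℕ) : ℤ) : ZMod (p ^ m)) := by
  have h1 : ∑ x ∈ I, gg p m n x = ∑ x, if x ∈ I then gg p m n x else 0 := by
    rw [Finset.sum_ite_mem, Finset.univ_inter]
  rw [h1, Prod.fst_sum, Fintype.sum_sum_type, Fintype.sum_prod_type]
  have h2 : ∑ y : Fin n × Fin 3, (if (Sum.inr y : Ix p m n) ∈ I then gg p m n (Sum.inr y)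
      else 0).1 = 0 := by
    refine Finset.sum_eq_zero fun y _ => ?_
    split_ifs <;> rfl
  rw [h2, add_zero, Int.cast_sum]
  refine Finset.sum_congr rfl fun k _ => ?_
  rw [bX, Finset.sum_filter, Finset.sum_mul, Int.cast_sum]
  refine Finset.sum_congr rfl fun j _ => ?_
  split_ifs
  · rfl
  · simp

lemma sum_gg_snd (I : Finset (Ix p m n)) (a : Fin n) : (∑ x ∈ I, gg p m n x).2 a =
    ((bY I a).card : ZMod 3) := by
  have h1 : ∑ x ∈ I, gg p m n x = ∑ x, if x ∈ I then gg p m n x else 0 := by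
    rw [Finset.sum_ite_mem, Finset.univ_inter]
  have h2 : ∑ y : Fin m × Fin p, (if (Sum.inl y : Ix p m n) ∈ I then gg p m n (Sum.inl y)
      else 0).2 = 0 := by
    refine Finset.sum_eq_zero fun y _ => ?_
    split_ifs <;> rfl
  rw [h1, Prod.snd_sum, Fintype.sum_sum_type, h2, zero_add, Fintype.sum_prod_type,
    Finset.sum_apply]
  have h3 : ∀ b : Fin n, (∑ j : Fin 3, (if (Sum.inr (b, j) : Ix p m n) ∈ I then
      gg p m n (Sum.inr (b, j)) else 0).2) a = if a = b then ((bY I a).card : ZMod 3) else 0 := by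
    intro b
    rw [Finset.sum_apply]
    by_cases hab : a = b
    · subst hab
      rw [if_pos rfl, bY, Finset.card_filter, Nat.cast_sum]
      refine Finset.sum_congr rfl fun j _ => ?_
      split_ifs <;> simp [gg]
    · rw [if_neg hab]
      refine Finset.sum_eq_zero fun j _ => ?_
      split_ifs <;> simp [gg, hab]
  simp only [h3]
  simp

lemma sum_gg_iff (hp : 0 < p) (I : Finset (Ix p m n)) : ∑ x ∈ I, gg p m n x = 0 ↔
    (∀ k, bX I k = ∅ ∨ bX I k = univ) ∧ (∀ a, bY I a = ∅ ∨ bY I a = univ) := by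
  rw [Prod.ext_iff, funext_iff]
  refine and_congr ?_ ?_
  · rw [sum_gg_fst, Prod.fst_zero, ZMod.intCast_zmod_eq_zero_iff_dvd, Nat.cast_pow]
    constructor
    · intro h k
      exact (cf_facts hp _).2.1 (digits hp m _ (fun k => (cf_facts hp _).1) h k)
    · intro h
      have : ∀ k : Fin m, ∑ j ∈ bX I k, cf p j = 0 := fun k => (cf_facts hp _).2.2 (h k)
      simp [this]
  · refine forall_congr' fun a => ?_
    rw [sum_gg_snd, ← three_facts]
    rfl

lemma gg_good (hp : 0 < p) : Good (gg p m n) := by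
  refine Good.of_blocks (β := Fin m ⊕ Fin n) (gg p m n) (Sum.map Prod.fst Prod.fst) ?_ ?_
  · intro t
    rw [sum_gg_iff hp]
    constructor
    · intro k
      by_cases h : Sum.inl k = t
      · right; ext j; simp [bX, h]
      · left; ext j; simp [bX, h]
    · intro k
      by_cases h : Sum.inr k = t
      · right; ext j; simp [bY, h]
      · left; ext j; simp [bY, h]
  · intro I hI
    obtain ⟨hX, hY⟩ := (sum_gg_iff hp I).1 hI
    rintro (⟨k, j⟩ | ⟨k, j⟩) (⟨k', j'⟩ | ⟨k', j'⟩) hb hi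
    · simp at hb
      subst hb
      have h1 : j ∈ bX I k := by simp [bX, hi]
      rcases hX k with h | h
      · rw [h] at h1; simp at h1
      · have : j' ∈ bX I k := by rw [h]; simp
        simpa [bX] using this
    · simp at hb
    · simp at hb
    · simp at hb
      subst hb
      have h1 : j ∈ bY I k := by simp [bY, hi]
      rcases hY k with h | h
      · rw [h] at h1; simp at h1
      · have : j' ∈ bY I k := by rw [h]; simp
        simpa [bY] using this

lemma order_nat (hp : p.Prime) {u k : ℕ} (hk : k ≤ m) (hu : Nat.Coprime p u) :
    addOrderOf ((u * p ^ k : ℕ) : ZMod (p ^ m)) = p ^ (m - k) := by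
  rw [ZMod.addOrderOf_coe _ (pow_ne_zero _ hp.ne_zero),
    Nat.Coprime.gcd_mul_left_cancel_right _ (Nat.Coprime.pow_left _ hu).symm,
    Nat.gcd_eq_right (pow_dvd_pow p hk), Nat.pow_div hk hp.pos]

lemma order_inl (hp : p.Prime) (k : Fin m) (j : Fin p) :
    addOrderOf (gg p m n (Sum.inl (k, j))) = p ^ (m - k) := by
  rw [gg, Prod.addOrderOf_mk, addOrderOf_zero, Nat.lcm_one_right]
  unfold cf
  split_ifs
  · have : (((1 - (p : ℤ)) * (p : ℤ) ^ (k : ℕ) : ℤ) : ZMod (p ^ m)) =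
        - (((p - 1) * p ^ (k : ℕ) : ℕ) : ZMod (p ^ m)) := by
      push_cast [Nat.cast_sub hp.one_lt.le]
      ring
    rw [this, addOrderOf_neg]
    refine order_nat hp k.2.le ?_
    rw [Nat.coprime_self_sub_right hp.one_lt.le]
    simp
  · have : ((1 * (p : ℤ) ^ (k : ℕ) : ℤ) : ZMod (p ^ m)) =
        ((1 * p ^ (k : ℕ) : ℕ) : ZMod (p ^ m)) := by
      push_cast; ring
    rw [this]
    exact order_nat hp k.2.le (by simp)

lemma order_inr (x : Fin n × Fin 3) : addOrderOf (gg p m n (Sum.inr x)) = 3 := by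
  obtain ⟨a, j⟩ := x
  have : Fact (Nat.Prime 3) := ⟨by norm_num⟩
  rw [gg, Prod.addOrderOf_mk, addOrderOf_zero, Nat.lcm_one_left]
  apply addOrderOf_eq_prime (snd_tors _)
  rw [ne_eq, Pi.single_eq_zero_iff]
  decide

lemma lower (hp : p.Prime) : ∃ (ℓ : ℕ) (g : Fin ℓ → GG p m n), IsUFIM g ∧
    crossNum g = ∑ k ∈ Finset.range m, (1 : ℝ) / (p : ℝ) ^ k + n := by
  let e := Fintype.equivFin (Ix p m n)
  refine ⟨_, fun i => gg p m n (e.symm i), Good.isUFIM ?_ ?_, ?_⟩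
  · refine (gg_good hp.pos).push e _ fun k => ?_
    have : univ.filter (fun i => e i = k) = {e.symm k} := by
      ext i; simp [Equiv.eq_symm_apply]
    rw [this, Finset.sum_singleton]
  · intro i hi
    have : addOrderOf (gg p m n (e.symm i)) = 1 := by rw [hi, addOrderOf_zero]
    revert this
    rcases e.symm i with ⟨k, j⟩ | x
    · rw [order_inl hp]
      have := k.2
      exact (Nat.one_lt_pow (by omega) hp.one_lt).ne'
    · rw [order_inr]; norm_num
  · unfold crossNum
    rw [Equiv.sum_comp e.symm (fun x => (1 : ℝ) / (addOrderOf (gg p m n x) : ℝ)),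
      Fintype.sum_sum_type, Fintype.sum_prod_type]
    simp only [order_inl hp, order_inr]
    congr 1
    · rw [Finset.sum_range, ← Equiv.sum_comp Fin.revPerm]
      refine Finset.sum_congr rfl fun k _ => ?_
      have hp0 : (p : ℝ) ≠ 0 := by exact_mod_cast hp.ne_zero
      have : m - ((Fin.revPerm k : Fin m) : ℕ) = k + 1 := by
        have := k.2
        simp [Fin.val_rev]; omega
      rw [this, Finset.sum_const, Finset.card_univ, Fintype.card_fin, nsmul_eq_mul]
      push_cast
      rw [pow_succ]
      field_simp
    · simp

lemma geom_eq (hp : p.Prime) (hm : 1 ≤ m) : ∑ k ∈ Finset.range m, (1 : ℝ) / (p : ℝ) ^ k =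
    ((p : ℝ) ^ m - 1) / ((p : ℝ) ^ m - (p : ℝ) ^ (m - 1)) := by
  have hp1 : (1 : ℝ) < p := by exact_mod_cast hp.one_lt
  have hp2 : (p : ℝ) - 1 ≠ 0 := by linarith
  obtain ⟨m, rfl⟩ := Nat.exists_eq_add_of_le' hm
  rw [Nat.add_sub_cancel]
  have hd : ∀ m : ℕ, (p : ℝ) ^ (m + 1) - (p : ℝ) ^ m = p ^ m * (p - 1) := fun m => by ring
  have hp0 : (p : ℝ) ≠ 0 := by linarith
  rw [hd]
  clear hm
  induction m with
  | zero => simp [div_self hp2]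
  | succ m ih =>
    rw [Finset.sum_range_succ, ih]
    field_simp
    ring

end lower
end UF


/-- `K₁(C_{p^m} ⊕ C_3^n) = Σ_{k=1}^m 1/p^{k−1} + n = (p^m − 1)/(p^m − p^{m−1}) + n`
for a prime `p ≠ 3`. -/
theorem K1_pm_3n (p : ℕ) (hp : p.Prime) (hp3 : p ≠ 3) (m n : ℕ) (hm : 1 ≤ m) (hn : 1 ≤ n) :
    K1 (ZMod (p ^ m) × (Fin n → ZMod 3)) =
      (∑ k ∈ Finset.range m, (1 : ℝ) / (p : ℝ) ^ k) + n ∧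
    K1 (ZMod (p ^ m) × (Fin n → ZMod 3)) =
      ((p : ℝ) ^ m - 1) / ((p : ℝ) ^ m - (p : ℝ) ^ (m - 1)) + n := by
  have h : K1 (ZMod (p ^ m) × (Fin n → ZMod 3)) =
      (∑ k ∈ Finset.range m, (1 : ℝ) / (p : ℝ) ^ k) + n := by
    unfold K1
    apply IsGreatest.csSup_eq
    refine ⟨UF.lower hp, ?_⟩
    rintro x ⟨ℓ, g, hg, rfl⟩
    exact UF.upper hp hp3 g hg
  exact ⟨h, by rw [h, UF.geom_eq hp hm]⟩
end

section
/- Let G be a finite abelian group, let S be a UFIM over G∖{0}, and let S_0 ⊆ S be a subfamily with σ(S_0) ≠ 0, where σ(S_0) denotes the sum of the elements of S_0. Then the indexed multiset (S∖S_0) ⊔ {σ(S_0)}, obtained from S by deleting the elements of S_0 and adjoining the single element σ(S_0), is also a UFIM over G∖{0}. -/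
open Finset

lemma exists_min_zs {G : Type*} [AddCommGroup G] {ℓ : ℕ} (g : Fin ℓ → G)
    (A : Finset (Fin ℓ)) : A.Nonempty → ∑ i ∈ A, g i = 0 → ∃ I ⊆ A, IsMinZeroSum g I := by
  induction A using Finset.strongInduction with
  | H A ih =>
    intro hne h0
    by_cases h : ∃ J ⊂ A, J.Nonempty ∧ ∑ i ∈ J, g i = 0
    · obtain ⟨J, hJ, hJn, hJ0⟩ := h
      obtain ⟨I, hI, hm⟩ := ih J hJ hJn hJ0
      exact ⟨I, hI.trans hJ.subset, hm⟩
    · push Not at h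
      exact ⟨A, subset_rfl, hne, h0, h⟩

lemma exists_fact_extend {G : Type*} [AddCommGroup G] {ℓ : ℕ} (g : Fin ℓ → G)
    (A : Finset (Fin ℓ)) : ∀ (B C : Finset (Fin ℓ)) (P : Finpartition B), Disjoint A B →
      A ∪ B = C → ∑ i ∈ A, g i = 0 → (∀ I ∈ P.parts, IsMinZeroSum g I) →
      ∃ Q : Finpartition C, P.parts ⊆ Q.parts ∧ ∀ I ∈ Q.parts, IsMinZeroSum g I := by
  induction A using Finset.strongInduction with
  | H A ih =>
    intro B C P hd hC h0 hP
    rcases A.eq_empty_or_nonempty with rfl | hne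
    · have : B = C := by simpa using hC
      subst this
      exact ⟨P, subset_rfl, hP⟩
    · obtain ⟨I, hIA, hI⟩ := exists_min_zs g A hne h0
      have hBI : Disjoint B I := (hd.mono_left hIA).symm
      have hIb : I ≠ ⊥ := hI.1.ne_empty
      obtain ⟨Q, hQ, hQm⟩ := ih (A \ I) (Finset.sdiff_ssubset hIA hI.1) (B ∪ I) C
        (P.extend hIb hBI rfl)
        (by
          rw [Finset.disjoint_union_right]
          exact ⟨hd.mono_left Finset.sdiff_subset, Finset.sdiff_disjoint⟩)
        (by
          rw [← hC]
          ext x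
          have := @hIA x
          simp only [Finset.mem_union, Finset.mem_sdiff]
          tauto)
        (by
          have := Finset.sum_sdiff (f := g) hIA
          rw [hI.2.1, add_zero] at this
          rw [this, h0])
        (by
          intro J hJ
          simp only [Finpartition.extend_parts, Finset.mem_insert] at hJ
          rcases hJ with rfl | hJ
          · exact hI
          · exact hP J hJ)
      refine ⟨Q, fun J hJ => hQ ?_, hQm⟩
      simp [Finpartition.extend_parts, hJ]

lemma zs_union {G : Type*} [AddCommGroup G] {ℓ : ℕ} (g : Fin ℓ → G)
    (P : Finpartition (Finset.univ : Finset (Fin ℓ))) (hP : IsFactorization g P)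
    (hu : ∀ Q, IsFactorization g Q → Q = P) (h0 : ∑ i, g i = 0)
    (J : Finset (Fin ℓ)) (hJ : ∑ i ∈ J, g i = 0) :
    ∃ T ⊆ P.parts, T.biUnion id = J := by
  obtain ⟨R, -, hR⟩ := exists_fact_extend g J ∅ J (Finpartition.empty _) (by simp) (by simp) hJ
    (by simp)
  obtain ⟨Q, hRQ, hQ⟩ := exists_fact_extend g (Finset.univ \ J) J Finset.univ R
    Finset.sdiff_disjoint (by simp)
    (by
      have := Finset.sum_sdiff (f := g) (Finset.subset_univ J)
      rwa [hJ, add_zero, h0] at this) hR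
  obtain rfl := hu Q hQ
  exact ⟨R.parts, hRQ, R.biUnion_parts⟩

lemma zs_biUnion {G : Type*} [AddCommGroup G] {ℓ : ℕ} (g : Fin ℓ → G)
    (P : Finpartition (Finset.univ : Finset (Fin ℓ))) (hP : IsFactorization g P)
    (T : Finset (Finset (Fin ℓ))) (hT : T ⊆ P.parts) : ∑ i ∈ T.biUnion id, g i = 0 := by
  rw [Finset.sum_biUnion (P.disjoint.subset (by exact_mod_cast hT))]
  exact Finset.sum_eq_zero fun I hI => (hP I (hT hI)).2.1

lemma ufim_iff {G : Type*} [AddCommGroup G] {ℓ : ℕ} (g : Fin ℓ → G) :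
    IsUFIM g ↔ (∀ i, g i ≠ 0) ∧ ∑ i, g i = 0 ∧ ∀ J K : Finset (Fin ℓ),
      ∑ i ∈ J, g i = 0 → ∑ i ∈ K, g i = 0 → ∑ i ∈ J ∩ K, g i = 0 := by
  constructor
  · rintro ⟨hn, P, hP, hu⟩
    have h0 : ∑ i, g i = 0 := by
      have := zs_biUnion g P hP P.parts subset_rfl
      rwa [P.biUnion_parts] at this
    refine ⟨hn, h0, fun J K hJ hK => ?_⟩
    obtain ⟨T, hT, rfl⟩ := zs_union g P hP hu h0 J hJ
    obtain ⟨U, hU, rfl⟩ := zs_union g P hP hu h0 K hK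
    have : T.biUnion id ∩ U.biUnion id = (T ∩ U).biUnion id := by
      ext x
      simp only [Finset.mem_inter, Finset.mem_biUnion, id]
      constructor
      · rintro ⟨⟨a, ha, hxa⟩, b, hb, hxb⟩
        have := P.eq_of_mem_parts (hT ha) (hU hb) hxa hxb
        subst this
        exact ⟨a, ⟨ha, hb⟩, hxa⟩
      · rintro ⟨a, ⟨ha, hb⟩, hx⟩
        exact ⟨⟨a, ha, hx⟩, a, hb, hx⟩
    rw [this]
    exact zs_biUnion g P hP _ (Finset.inter_subset_left.trans hT)
  · rintro ⟨hn, h0, hc⟩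
    obtain ⟨P, -, hP⟩ := exists_fact_extend g Finset.univ ∅ Finset.univ (Finpartition.empty _)
      (by simp) (by simp) h0 (by simp)
    have key : ∀ P Q : Finpartition (Finset.univ : Finset (Fin ℓ)), IsFactorization g P →
        IsFactorization g Q → P.parts ⊆ Q.parts := by
      intro P Q hP hQ I hI
      obtain ⟨x, hx⟩ := (hP I hI).1
      obtain ⟨J, hJ, hxJ⟩ := Q.exists_mem (Finset.mem_univ x)
      have hz := hc I J (hP I hI).2.1 (hQ J hJ).2.1
      have hne : (I ∩ J).Nonempty := ⟨x, Finset.mem_inter.2 ⟨hx, hxJ⟩⟩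
      have h1 : I ∩ J = I := by
        by_contra h
        exact (hP I hI).2.2 _ (Finset.ssubset_iff_subset_ne.2 ⟨Finset.inter_subset_left, h⟩) hne hz
      have h2 : I ∩ J = J := by
        by_contra h
        exact (hQ J hJ).2.2 _ (Finset.ssubset_iff_subset_ne.2 ⟨Finset.inter_subset_right, h⟩) hne hz
      rw [← h1, h2]
      exact hJ
    refine ⟨hn, P, hP, fun Q hQ => ?_⟩
    exact Finpartition.ext (Finset.Subset.antisymm (key Q P hQ hP) (key P Q hP hQ))

lemma exists_equiv_of_map_eq {α β γ : Type*} [Fintype α] [Fintype β] (f : α → γ) (h : β → γ)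
    (H : Multiset.map f Finset.univ.val = Multiset.map h Finset.univ.val) :
    ∃ e : α ≃ β, ∀ a, h (e a) = f a := by
  classical
  have hc : ∀ c, Nonempty ({a // f a = c} ≃ {b // h b = c}) := by
    intro c
    rw [← Fintype.card_eq, Fintype.card_subtype, Fintype.card_subtype]
    have := congrArg (Multiset.count c) H
    rw [Multiset.count_map, Multiset.count_map] at this
    simpa [Finset.card_def, Finset.filter_val, eq_comm] using this
  exact ⟨Equiv.ofFiberEquiv fun c => (hc c).some, Equiv.ofFiberEquiv_map _⟩

/-- Proposition (lift): if `S` is a UFIM over `G∖{0}` and `S₀ ⊆ S` has `σ(S₀) ≠ 0`,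
then `(S∖S₀) ⊔ {σ(S₀)}` is also a UFIM over `G∖{0}`. The new indexed multiset is any
family `g'` whose multiset of values is that of `g` off `I₀` together with `σ(S₀)`. -/
theorem ufim_lift {G : Type*} [AddCommGroup G] {ℓ : ℕ} (g : Fin ℓ → G) (hg : IsUFIM g)
    (I₀ : Finset (Fin ℓ)) (hI₀ : ∑ i ∈ I₀, g i ≠ 0)
    {ℓ' : ℕ} (g' : Fin ℓ' → G)
    (hvals : Multiset.map g' Finset.univ.val =
      Multiset.map g (Finset.univ \ I₀).val + {∑ i ∈ I₀, g i}) :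
    IsUFIM g' := by
  rw [ufim_iff] at hg
  obtain ⟨hn, h0, hc⟩ := hg
  obtain ⟨e, he⟩ := exists_equiv_of_map_eq
    (fun o : Option {i // i ∈ Finset.univ \ I₀} => o.elim (∑ i ∈ I₀, g i) fun i => g i) g' (by
      rw [hvals, add_comm, Multiset.singleton_add, univ_option, Finset.insertNone]
      simp only [OrderEmbedding.coe_ofMapLEIff, Finset.cons_val, Multiset.map_cons,
        Finset.map_val, Multiset.map_map]
      congr 1
      have hat : ∀ F : Fintype {i // i ∈ Finset.univ \ I₀}, @Finset.univ _ F =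
          (Finset.univ \ I₀).attach := by
        intro F
        ext x
        simp only [Finset.mem_univ, Finset.mem_attach]
      rw [hat _, Finset.attach_val]
      exact Multiset.attach_map_val' _ g)
  have hn' : ∀ j, g' j ≠ 0 := by
    intro j
    obtain ⟨o, rfl⟩ := e.surjective j
    rw [he]
    cases o with
    | none => exact hI₀
    | some i => exact hn _
  let f : Fin ℓ → Fin ℓ' := fun i => if h : i ∈ Finset.univ \ I₀ then e (some ⟨i, h⟩) else e none
  have hf : ∀ j, ∑ i with f i = j, g i = g' j := by
    intro j
    obtain ⟨o, rfl⟩ := e.surjective j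
    rw [he]
    cases o with
    | none =>
      refine Finset.sum_congr ?_ fun _ _ => rfl
      ext i
      by_cases h : i ∈ I₀ <;> simp [f, h]
    | some k =>
      obtain ⟨k, hk⟩ := k
      have : (Finset.univ.filter fun i => f i = e (some ⟨k, hk⟩)) = {k} := by
        ext i
        have hk' : k ∉ I₀ := by simpa using hk
        by_cases h : i ∈ I₀
        · have : i ≠ k := fun hh => hk' (hh ▸ h)
          simp [f, h, this]
        · simp [f, h]
      rw [this]
      simp
  have hs : ∀ J : Finset (Fin ℓ'), ∑ j ∈ J, g' j = ∑ i with f i ∈ J, g i := by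
    intro J
    rw [← Finset.sum_fiberwise_of_maps_to (s := Finset.univ.filter fun i => f i ∈ J) (t := J)
      (g := f) (by simp)]
    refine Finset.sum_congr rfl fun j hj => ?_
    rw [← hf j, Finset.filter_filter]
    refine Finset.sum_congr ?_ fun _ _ => rfl
    ext i
    simp only [Finset.mem_filter, Finset.mem_univ, true_and]
    exact ⟨fun h => ⟨h ▸ hj, h⟩, fun h => h.2⟩
  rw [ufim_iff]
  refine ⟨hn', ?_, fun J K hJ hK => ?_⟩
  · rw [hs]
    simpa using h0
  · rw [hs] at hJ hK ⊢
    rw [← hc _ _ hJ hK]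
    refine Finset.sum_congr ?_ fun _ _ => rfl
    ext i
    simp
end

section
/- Let G be a finite abelian group and S a UFIM over G∖{0} with irreducible factorization [ℓ] = I_1 ⊔ ⋯ ⊔ I_m. Then ∏_{i=1}^m |I_i| ≤ |G|; in particular 2^m ≤ |G|, i.e., m ≤ log_2 |G|. -/
open Finset

lemma ufim_exists_min {G : Type*} [AddCommGroup G] {ℓ : ℕ} (g : Fin ℓ → G)
    (T : Finset (Fin ℓ)) (hne : T.Nonempty) (h0 : ∑ i ∈ T, g i = 0) :
    ∃ J ⊆ T, IsMinZeroSum g J := by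
  induction T using Finset.strongInduction with
  | H T ih =>
    by_cases h : ∃ J ⊂ T, J.Nonempty ∧ ∑ i ∈ J, g i = 0
    · obtain ⟨J, hJ, hJn, hJ0⟩ := h
      obtain ⟨K, hK, hm⟩ := ih J hJ hJn hJ0
      exact ⟨K, hK.trans hJ.subset, hm⟩
    · push Not at h
      exact ⟨T, Finset.Subset.refl _, hne, h0, h⟩

lemma ufim_extend {G : Type*} [AddCommGroup G] {ℓ : ℕ} (g : Fin ℓ → G)
    (T : Finset (Fin ℓ)) : ∀ (A : Finset (Fin ℓ)) (Q : Finpartition A)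
    (_ : ∀ I ∈ Q.parts, IsMinZeroSum g I) (_ : Disjoint A T) (_ : ∑ i ∈ T, g i = 0),
    ∃ Q' : Finpartition (A ∪ T), (∀ I ∈ Q'.parts, IsMinZeroSum g I) ∧ Q.parts ⊆ Q'.parts := by
  induction T using Finset.strongInduction with
  | H T ih =>
    intro A Q hQ hd h0
    rcases T.eq_empty_or_nonempty with rfl | hne
    · rw [Finset.union_empty]
      exact ⟨Q, hQ, Finset.Subset.refl _⟩
    · obtain ⟨J, hJT, hJ⟩ := ufim_exists_min g T hne h0
      have hlt : T \ J ⊂ T := Finset.sdiff_ssubset hJT hJ.1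
      have hs : ∑ i ∈ T \ J, g i = 0 := by
        have := Finset.sum_sdiff (f := g) hJT
        rw [hJ.2.1, h0, add_zero] at this
        exact this
      have hAJ : Disjoint A J := hd.mono_right hJT
      have hJb : J ≠ ⊥ := hJ.1.ne_empty
      obtain ⟨Q', h1, h2⟩ := ih _ hlt (A ∪ J) (Q.extend hJb hAJ rfl) (by
        intro I hI
        rw [Finpartition.extend_parts, Finset.mem_insert] at hI
        rcases hI with rfl | hI
        · exact hJ
        · exact hQ I hI) (by
        rw [Finset.disjoint_union_left]
        exact ⟨hd.mono_right Finset.sdiff_subset, Finset.disjoint_sdiff⟩) hs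
      have e : A ∪ J ∪ (T \ J) = A ∪ T := by
        rw [Finset.union_assoc, Finset.union_sdiff_of_subset hJT]
      rw [← e]
      exact ⟨Q', h1, fun I hI => h2 (by
        rw [Finpartition.extend_parts]; exact Finset.mem_insert_of_mem hI)⟩

/-- A zero-sum subfamily of a UFIM is a union of parts. -/
lemma ufim_union {G : Type*} [AddCommGroup G] {ℓ : ℕ} (g : Fin ℓ → G) (hg : IsUFIM g)
    (P : Finpartition (Finset.univ : Finset (Fin ℓ))) (hP : IsFactorization g P)
    (T : Finset (Fin ℓ)) (h0 : ∑ i ∈ T, g i = 0) (I : Finset (Fin ℓ)) (hI : I ∈ P.parts)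
    (x y : Fin ℓ) (hx : x ∈ I) (hy : y ∈ I) (hyT : y ∈ T) : x ∈ T := by
  have htot : ∑ i, g i = 0 := by
    rw [← P.biUnion_parts, Finset.sum_biUnion P.disjoint]
    exact Finset.sum_eq_zero fun I hI => (hP I hI).2.1
  have e1 : (⊥ : Finset (Fin ℓ)) ∪ T = T := by simp
  have hex := ufim_extend g T ⊥ (Finpartition.empty _)
    (by intro I hI; simp [Finpartition.empty] at hI) (by simp) h0
  rw [e1] at hex
  obtain ⟨Q, hQ, -⟩ := hex
  have hc : ∑ i ∈ Tᶜ, g i = 0 := by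
    have := Finset.sum_add_sum_compl T g
    rwa [h0, htot, zero_add] at this
  obtain ⟨Q', hQ', hsub⟩ := ufim_extend g Tᶜ T Q hQ disjoint_compl_right hc
  have e2 : T ∪ Tᶜ = Finset.univ := Finset.union_compl T
  obtain ⟨R, hR, hRs⟩ : ∃ R : Finpartition (Finset.univ : Finset (Fin ℓ)),
      IsFactorization g R ∧ Q.parts ⊆ R.parts := by
    exact ⟨Q'.copy e2, hQ', hsub⟩
  have hRP : R = P := hg.2.unique hR hP
  subst hRP
  obtain ⟨K, hK, hyK⟩ := Q.exists_mem hyT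
  have : K = I := R.eq_of_mem_parts (hRs hK) hI hyK hy
  subst this
  exact Q.le hK hx

lemma ufim_block {G : Type*} [AddCommGroup G] {ℓ : ℕ} (g : Fin ℓ → G)
    (I : Finset (Fin ℓ)) (h0 : ∑ i ∈ I, g i = 0) (x y : Fin ℓ) (hx : x ∈ I) (hy : y ∈ I) :
    ∃ T ⊆ I, ∑ i ∈ T, g i = ∑ i ∈ I with i < x, g i - ∑ i ∈ I with i < y, g i ∧
      (x ≠ y → y ∈ T ∧ x ∉ T) := by
  have key : ∀ a b : Fin ℓ, a ≤ b → ∑ i ∈ I with (a ≤ i ∧ i < b), g i =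
      ∑ i ∈ I with i < b, g i - ∑ i ∈ I with i < a, g i := by
    intro a b hab
    rw [eq_sub_iff_add_eq, ← Finset.sum_union]
    · congr 1
      ext i
      simp only [Finset.mem_union, Finset.mem_filter]
      grind
    · rw [Finset.disjoint_left]
      intro i
      simp only [Finset.mem_filter]
      grind
  rcases le_total y x with h | h
  · refine ⟨_, Finset.filter_subset _ _, key y x h, fun hne => ?_⟩
    simp only [Finset.mem_filter]
    grind
  · refine ⟨_, Finset.filter_subset (fun i => ¬ (x ≤ i ∧ i < y)) I, ?_, ?_⟩
    · have := Finset.sum_filter_add_sum_filter_not I (fun i => x ≤ i ∧ i < y) g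
      rw [h0, key x y h] at this
      rw [eq_neg_of_add_eq_zero_right this, neg_sub]
    · intro hne
      simp only [Finset.mem_filter]
      grind

/-- Proposition: if `S` is a UFIM over `G∖{0}` with irreducible factorization
`I_1 ⊔ ⋯ ⊔ I_m`, then `∏ |I_i| ≤ |G|`; in particular `2^m ≤ |G|`, i.e.
`m ≤ log₂ |G|`. -/
theorem factorization_prod_card_le {G : Type*} [AddCommGroup G] [Fintype G]
    {ℓ : ℕ} (g : Fin ℓ → G) (hg : IsUFIM g)
    (P : Finpartition (Finset.univ : Finset (Fin ℓ))) (hP : IsFactorization g P) :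
    (∏ I ∈ P.parts, I.card) ≤ Fintype.card G ∧
    2 ^ P.parts.card ≤ Fintype.card G ∧
    (P.parts.card : ℝ) ≤ Real.logb 2 (Fintype.card G) := by
  have h1 : (∏ I ∈ P.parts, I.card) ≤ Fintype.card G := by
    have hc : (∏ I ∈ P.parts, I.card) = Fintype.card ((I : P.parts) → I.1) := by
      rw [Fintype.card_pi]
      simp only [Fintype.card_coe]
      exact (Finset.prod_coe_sort P.parts (fun I => I.card)).symm
    rw [hc]
    refine Fintype.card_le_of_injective
      (fun x => ∑ I : P.parts, ∑ i ∈ I.1 with i < (x I).1, g i) ?_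
    intro x y hxy
    by_contra hne
    obtain ⟨I, hI⟩ := Function.ne_iff.mp hne
    have hb := fun I : P.parts => ufim_block g I.1 (hP I.1 I.2).2.1 (x I).1 (y I).1
      (x I).2 (y I).2
    choose T hTI hTs hT using hb
    have hI' : (x I).1 ≠ (y I).1 := fun h => hI (Subtype.ext h)
    have hdisj : ∀ A B : P.parts, A ≠ B → Disjoint A.1 B.1 := fun A B hAB =>
      P.disjoint A.2 B.2 (fun h => hAB (Subtype.ext h))
    have hz : ∑ i ∈ Finset.univ.biUnion T, g i = 0 := by
      rw [Finset.sum_biUnion]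
      · simp only [hTs, Finset.sum_sub_distrib]
        exact sub_eq_zero.mpr hxy
      · intro A _ B _ hAB
        exact (hdisj A B hAB).mono (hTI A) (hTI B)
    have hx := ufim_union g hg P hP _ hz I.1 I.2 (x I).1 (y I).1 (x I).2 (y I).2
      (Finset.mem_biUnion.mpr ⟨I, Finset.mem_univ _, (hT I hI').1⟩)
    obtain ⟨J, -, hJ⟩ := Finset.mem_biUnion.mp hx
    by_cases hJI : J = I
    · subst hJI
      exact (hT J hI').2 hJ
    · exact Finset.disjoint_left.mp (hdisj J I hJI) (hTI J hJ) (x I).2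
  have h2 : 2 ^ P.parts.card ≤ Fintype.card G := by
    refine le_trans ?_ h1
    refine Finset.pow_card_le_prod _ _ _ fun I hI => ?_
    have hm := hP I hI
    have hpos := hm.1.card_pos
    by_contra hlt
    have h1' : I.card = 1 := by omega
    obtain ⟨a, rfl⟩ := Finset.card_eq_one.mp h1'
    exact hg.1 a (by simpa using hm.2.1)
  refine ⟨h1, h2, ?_⟩
  rw [Real.le_logb_iff_rpow_le (by norm_num) (by exact_mod_cast Fintype.card_pos),
    Real.rpow_natCast]
  exact_mod_cast h2
end

section
/- Let p be a prime and G = ⊕_{j=1}^{t} C_{p^{e_j}} a nontrivial finite abelian p-group, and set K_1^*(G) = Σ_{j=1}^{t} (p^{e_j} − 1)/(p^{e_j} − p^{e_j−1}). If S is a UFIM over G∖{0} whose irreducible factorization has m parts and m ≤ K_1^*(G), then k(S) ≤ K_1^*(G). -/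
open Finset

theorem exists_minZeroSum_subset {G : Type*} [AddCommGroup G] {ℓ : ℕ} (g : Fin ℓ → G)
    (A : Finset (Fin ℓ)) (hne : A.Nonempty) (hA : ∑ i ∈ A, g i = 0) :
    ∃ M ⊆ A, IsMinZeroSum g M := by
  classical
  obtain ⟨M, hM, hmin⟩ := Finset.exists_min_image
    (A.powerset.filter (fun J => J.Nonempty ∧ ∑ i ∈ J, g i = 0)) Finset.card
    ⟨A, by simp [hne, hA]⟩
  simp only [Finset.mem_filter, Finset.mem_powerset] at hM hmin
  refine ⟨M, hM.1, hM.2.1, hM.2.2, fun J hJ hJne h0 => ?_⟩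
  have h1 := hmin J ⟨hJ.subset.trans hM.1, hJne, h0⟩
  have h2 := Finset.card_lt_card hJ
  omega

theorem exists_factorization_on {G : Type*} [AddCommGroup G] {ℓ : ℕ} (g : Fin ℓ → G)
    (A : Finset (Fin ℓ)) (hA : ∑ i ∈ A, g i = 0) :
    ∃ Q : Finpartition A, ∀ I ∈ Q.parts, IsMinZeroSum g I := by
  classical
  induction A using Finset.strongInduction with
  | H A ih =>
    rcases A.eq_empty_or_nonempty with rfl | hne
    · exact ⟨Finpartition.empty _, by simp⟩
    · obtain ⟨M, hMA, hM⟩ := exists_minZeroSum_subset g A hne hA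
      have h0 : ∑ i ∈ A \ M, g i = 0 := by
        have h1 := Finset.sum_sdiff (f := g) hMA
        rw [hM.2.1, hA, add_zero] at h1
        exact h1
      obtain ⟨Q, hQ⟩ := ih (A \ M) (Finset.sdiff_ssubset hMA hM.1) h0
      refine ⟨Q.extend (b := M) hM.1.ne_empty Finset.sdiff_disjoint
        (Finset.sdiff_union_of_subset hMA), fun I hI => ?_⟩
      simp only [Finpartition.extend_parts, Finset.mem_insert] at hI
      rcases hI with rfl | hI
      · exact hM
      · exact hQ I hI

theorem IsUFIM.mem_parts {G : Type*} [AddCommGroup G] {ℓ : ℕ} {g : Fin ℓ → G}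
    (hg : IsUFIM g) {P : Finpartition (Finset.univ : Finset (Fin ℓ))}
    (hP : IsFactorization g P) {M : Finset (Fin ℓ)} (hM : IsMinZeroSum g M) :
    M ∈ P.parts := by
  classical
  have hall : ∑ i, g i = 0 := by
    rw [← P.sup_parts, Finset.sup_eq_biUnion, Finset.sum_biUnion P.disjoint]
    exact Finset.sum_eq_zero fun I hI => (hP I hI).2.1
  have h0 : ∑ i ∈ Finset.univ \ M, g i = 0 := by
    have h1 := Finset.sum_sdiff (f := g) (Finset.subset_univ M)
    rw [hM.2.1, hall, add_zero] at h1
    exact h1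
  obtain ⟨Q, hQ⟩ := exists_factorization_on g (Finset.univ \ M) h0
  have hQ' : IsFactorization g (Q.extend (b := M) (c := Finset.univ) hM.1.ne_empty
      Finset.sdiff_disjoint (Finset.sdiff_union_of_subset (Finset.subset_univ M))) := by
    intro I hI
    simp only [Finpartition.extend_parts, Finset.mem_insert] at hI
    rcases hI with rfl | hI
    · exact hM
    · exact hQ I hI
  rw [hg.2.unique hP hQ']
  simp

section GroupAlgebra

variable {p t : ℕ} {e : Fin t → ℕ}

/-- The group algebra of the group over the field with `p` elements. -/
abbrev GAlg (p t : ℕ) (e : Fin t → ℕ) : Type :=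
  AddMonoidAlgebra (ZMod p) (∀ j : Fin t, ZMod (p ^ e j))

/-- The group element `g` in the group algebra. -/
noncomputable def gX (g : ∀ j : Fin t, ZMod (p ^ e j)) : GAlg p t e :=
  AddMonoidAlgebra.single g 1

/-- The nilpotent generator attached to the coordinate `j`. -/
noncomputable def gY (p t : ℕ) (e : Fin t → ℕ) (j : Fin t) : GAlg p t e :=
  1 - gX (Pi.single j 1)

/-- The weight filtration. -/
noncomputable def gF (p t : ℕ) (e : Fin t → ℕ) (w : ℝ) : Ideal (GAlg p t e) :=
  Ideal.span {x | ∃ a : Fin t → ℕ, w ≤ ∑ j, (a j : ℝ) / (p : ℝ) ^ e j ∧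
    x = ∏ j, gY p t e j ^ a j}

theorem gX_zero : gX (0 : ∀ j : Fin t, ZMod (p ^ e j)) = 1 := rfl

theorem gX_add (a b : ∀ j : Fin t, ZMod (p ^ e j)) : gX (a + b) = gX a * gX b := by
  simp [gX, AddMonoidAlgebra.single_mul_single]

theorem gX_nsmul (n : ℕ) (a : ∀ j : Fin t, ZMod (p ^ e j)) : gX (n • a) = gX a ^ n := by
  induction n with
  | zero => simp [gX_zero]
  | succ n ih => rw [succ_nsmul, gX_add, ih, pow_succ]

theorem gX_sum {ι : Type*} (s : Finset ι) (f : ι → ∀ j : Fin t, ZMod (p ^ e j)) :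
    gX (∑ i ∈ s, f i) = ∏ i ∈ s, gX (f i) := by
  classical
  induction s using Finset.induction_on with
  | empty => simp [gX_zero]
  | insert a s ha ih => rw [Finset.sum_insert ha, Finset.prod_insert ha, gX_add, ih]

theorem gF_mul {v w : ℝ} {x y : GAlg p t e} (hx : x ∈ gF p t e v) (hy : y ∈ gF p t e w) :
    x * y ∈ gF p t e (v + w) := by
  have h := Ideal.mul_mem_mul hx hy
  unfold gF at h
  rw [Ideal.span_mul_span'] at h
  refine Ideal.span_le.2 ?_ h
  rintro _ ⟨_, ⟨a, ha, rfl⟩, _, ⟨b, hb, rfl⟩, rfl⟩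
  refine Ideal.subset_span ⟨a + b, ?_, ?_⟩
  · simp only [Pi.add_apply, Nat.cast_add, add_div, Finset.sum_add_distrib]
    exact add_le_add ha hb
  · simp only [Pi.add_apply, pow_add, Finset.prod_mul_distrib]

theorem gF_prod {ι : Type*} (s : Finset ι) (w : ι → ℝ) (x : ι → GAlg p t e)
    (h : ∀ i ∈ s, x i ∈ gF p t e (w i)) : ∏ i ∈ s, x i ∈ gF p t e (∑ i ∈ s, w i) := by
  classical
  induction s using Finset.induction_on with
  | empty =>
    exact Ideal.subset_span ⟨0, by simp, by simp⟩
  | insert a s ha ih =>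
    rw [Finset.sum_insert ha, Finset.prod_insert ha]
    exact gF_mul (h a (by simp)) (ih fun i hi => h i (by simp [hi]))

theorem one_sub_gX_pow (hp : p.Prime) (k : ℕ) (a : ∀ j : Fin t, ZMod (p ^ e j)) :
    (1 - gX a) ^ p ^ k = 1 - gX (p ^ k • a) := by
  have : Fact p.Prime := ⟨hp⟩
  have : CharP (GAlg p t e) p := by
    refine charP_of_injective_algebraMap (R := ZMod p) ?_ p
    exact (algebraMap (ZMod p) (GAlg p t e)).injective
  rw [sub_pow_char_pow, one_pow, gX_nsmul]

theorem gY_pow_eq_zero (hp : p.Prime) (j : Fin t) {n : ℕ} (hn : p ^ e j ≤ n) :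
    gY p t e j ^ n = 0 := by
  refine pow_eq_zero_of_le hn ?_
  rw [gY, one_sub_gX_pow hp]
  have : (p ^ e j) • (Pi.single j 1 : ∀ j : Fin t, ZMod (p ^ e j)) = 0 := by
    rw [← Pi.single_smul]
    simp
  rw [this, gX_zero, sub_self]

theorem gF_eq_bot (hp : p.Prime) {w : ℝ}
    (hw : ∑ j, ((p : ℝ) ^ e j - 1) / (p : ℝ) ^ e j < w) : gF p t e w = ⊥ := by
  rw [gF, Ideal.span_eq_bot]
  rintro _ ⟨a, ha, rfl⟩
  have hp0 : (0 : ℝ) < p := by exact_mod_cast hp.pos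
  obtain ⟨j, -, hj⟩ := Finset.exists_lt_of_sum_lt (hw.trans_le ha)
  have h1 : (p : ℝ) ^ e j - 1 < a j := (div_lt_div_iff_of_pos_right (by positivity)).1 hj
  have h2 : p ^ e j ≤ a j := by
    have : ((p ^ e j : ℕ) : ℝ) < ((a j + 1 : ℕ) : ℝ) := by push_cast; linarith
    have := Nat.cast_lt.1 this
    omega
  exact Finset.prod_eq_zero (Finset.mem_univ j) (gY_pow_eq_zero hp j h2)

theorem one_sub_gX_add_mem (I : Ideal (GAlg p t e)) {a b : ∀ j : Fin t, ZMod (p ^ e j)}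
    (ha : 1 - gX a ∈ I) (hb : 1 - gX b ∈ I) : 1 - gX (a + b) ∈ I := by
  have : 1 - gX (a + b) = (1 - gX a) + gX a * (1 - gX b) := by rw [gX_add]; ring
  rw [this]
  exact I.add_mem ha (I.mul_mem_left _ hb)

theorem one_sub_gX_nsmul_mem (I : Ideal (GAlg p t e)) {a : ∀ j : Fin t, ZMod (p ^ e j)}
    (ha : 1 - gX a ∈ I) (n : ℕ) : 1 - gX (n • a) ∈ I := by
  induction n with
  | zero => simp [gX_zero]
  | succ n ih => rw [succ_nsmul]; exact one_sub_gX_add_mem I ih ha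

theorem one_sub_gX_sum_mem (I : Ideal (GAlg p t e)) {ι : Type*} (s : Finset ι)
    (f : ι → ∀ j : Fin t, ZMod (p ^ e j))
    (h : ∀ i ∈ s, 1 - gX (f i) ∈ I) : 1 - gX (∑ i ∈ s, f i) ∈ I := by
  classical
  induction s using Finset.induction_on with
  | empty => simp [gX_zero]
  | insert a s ha ih =>
    rw [Finset.sum_insert ha]
    exact one_sub_gX_add_mem I (h a (by simp)) (ih fun i hi => h i (by simp [hi]))

theorem exists_addOrderOf_eq (hp : p.Prime) (g : ∀ j : Fin t, ZMod (p ^ e j)) :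
    ∃ k, addOrderOf g = p ^ k := by
  have h : addOrderOf g ∣ p ^ (∑ j, e j) := by
    refine addOrderOf_dvd_of_nsmul_eq_zero ?_
    funext j
    obtain ⟨c, hc⟩ : p ^ e j ∣ p ^ (∑ j, e j) :=
      pow_dvd_pow p (Finset.single_le_sum (fun _ _ => Nat.zero_le _) (Finset.mem_univ j))
    rw [hc, Pi.smul_apply, nsmul_eq_mul, Nat.cast_mul, ZMod.natCast_self, zero_mul, zero_mul]
    rfl
  obtain ⟨k, -, hk⟩ := (Nat.dvd_prime_pow hp).1 h
  exact ⟨k, hk⟩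

theorem one_sub_gX_mem (hp : p.Prime) (g : ∀ j : Fin t, ZMod (p ^ e j)) :
    1 - gX g ∈ gF p t e (1 / (addOrderOf g : ℝ)) := by
  have hp0 : (0 : ℝ) < p := by exact_mod_cast hp.pos
  have hp1 : (1 : ℝ) ≤ p := by exact_mod_cast hp.one_lt.le
  obtain ⟨k, hk⟩ := exists_addOrderOf_eq hp g
  rw [hk]
  rw [← Finset.univ_sum_single g]
  refine one_sub_gX_sum_mem _ _ _ fun j _ => ?_
  have : NeZero (p ^ e j) := ⟨(pow_pos hp.pos _).ne'⟩
  have hd : p ^ (e j - k) ∣ (g j).val := by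
    have h0 : p ^ k • g = 0 := by rw [← hk]; exact addOrderOf_nsmul_eq_zero g
    have h1 : p ^ k • g j = 0 := congrFun h0 j
    have h2 : ((p ^ k * (g j).val : ℕ) : ZMod (p ^ e j)) = 0 := by
      rw [Nat.cast_mul, ZMod.natCast_zmod_val, ← nsmul_eq_mul, h1]
    rw [ZMod.natCast_eq_zero_iff] at h2
    rcases le_total (e j) k with h | h
    · simp [Nat.sub_eq_zero_of_le h]
    · have h3 : p ^ e j = p ^ k * p ^ (e j - k) := by rw [← pow_add]; congr 1; omega
      exact Nat.dvd_of_mul_dvd_mul_left (pow_pos hp.pos k) (h3.symm.dvd.trans h2)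
  obtain ⟨c, hc⟩ := hd
  have h4 : (Pi.single j (g j) : ∀ j : Fin t, ZMod (p ^ e j))
      = c • (p ^ (e j - k) • Pi.single j 1) := by
    rw [← Pi.single_smul, ← Pi.single_smul]
    congr 1
    rw [nsmul_eq_mul, nsmul_eq_mul, mul_one, ← Nat.cast_mul, mul_comm c, ← hc,
      ZMod.natCast_zmod_val]
  rw [h4]
  refine one_sub_gX_nsmul_mem _ ?_ c
  rw [← one_sub_gX_pow hp]
  refine Ideal.subset_span ⟨Pi.single j (p ^ (e j - k)), ?_, ?_⟩
  · rw [Finset.sum_eq_single j]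
    · rw [Pi.single_eq_same]
      push_cast
      rw [div_le_div_iff₀ (by positivity) (by positivity), one_mul, ← pow_add]
      exact pow_le_pow_right₀ hp1 (by omega)
    · intro b _ hb
      simp [Pi.single_eq_of_ne hb]
    · simp
  · rw [Finset.prod_eq_single j]
    · rw [Pi.single_eq_same, gY]
    · intro b _ hb
      simp [Pi.single_eq_of_ne hb]
    · simp

theorem prod_one_sub_gX_ne_zero (hp : p.Prime) {ι : Type*} (s : Finset ι)
    (g : ι → ∀ j : Fin t, ZMod (p ^ e j))
    (h : ∀ J ⊆ s, J.Nonempty → ∑ i ∈ J, g i ≠ 0) : ∏ i ∈ s, (1 - gX (g i)) ≠ 0 := by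
  classical
  have : Fact p.Prime := ⟨hp⟩
  have key : (∏ i ∈ s, (1 - gX (g i))) = ∑ J ∈ s.powerset,
      AddMonoidAlgebra.single (∑ i ∈ J, g i) ((-1 : ZMod p) ^ J.card) := by
    simp only [sub_eq_add_neg]
    rw [Finset.prod_one_add]
    refine Finset.sum_congr rfl fun J hJ => ?_
    clear h hJ
    induction J using Finset.induction_on with
    | empty => simp [AddMonoidAlgebra.one_def]
    | insert a J ha ih =>
      have hn : -gX (g a) = AddMonoidAlgebra.single (g a) (-1 : ZMod p) := by
        rw [gX, AddMonoidAlgebra.single_neg]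
      rw [Finset.prod_insert ha, Finset.sum_insert ha, Finset.card_insert_of_notMem ha, ih, hn,
        AddMonoidAlgebra.single_mul_single, pow_succ']
  intro h0
  rw [h0] at key
  have h1 := congrArg (fun x : GAlg p t e => x.coeff 0) key
  simp only [AddMonoidAlgebra.coeff_sum, AddMonoidAlgebra.coeff_single, Finsupp.finsetSum_apply,
    AddMonoidAlgebra.coeff_zero, Finsupp.zero_apply] at h1
  rw [Finset.sum_eq_single ∅] at h1
  · simp at h1
  · intro J hJ hne
    rw [Finsupp.single_apply, if_neg (h J (Finset.mem_powerset.1 hJ)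
      (Finset.nonempty_iff_ne_empty.2 hne))]
  · simp

theorem cross_zeroSumFree (hp : p.Prime) {ι : Type*} (s : Finset ι)
    (g : ι → ∀ j : Fin t, ZMod (p ^ e j))
    (h : ∀ J ⊆ s, J.Nonempty → ∑ i ∈ J, g i ≠ 0) :
    ∑ i ∈ s, 1 / (addOrderOf (g i) : ℝ) ≤ ∑ j, ((p : ℝ) ^ e j - 1) / (p : ℝ) ^ e j := by
  by_contra! hlt
  have h1 := gF_prod s _ _ fun i _ => one_sub_gX_mem hp (g i)
  rw [gF_eq_bot hp hlt, Ideal.mem_bot] at h1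
  exact prod_one_sub_gX_ne_zero hp s g h h1

end GroupAlgebra

/-- Proposition: for a nontrivial finite abelian `p`-group `G = ⊕_{j} C_{p^{e_j}}`, if a
UFIM `S` over `G∖{0}` has an irreducible factorization with `m ≤ K₁*(G)` parts, then
`k(S) ≤ K₁*(G)`, where `K₁*(G) = Σ_j (p^{e_j} − 1)/(p^{e_j} − p^{e_j−1})`. -/
theorem crossNum_le_of_few_factors_pgroup (p : ℕ) (hp : p.Prime)
    (t : ℕ) (ht : 1 ≤ t) (e : Fin t → ℕ) (he : ∀ j, 1 ≤ e j)
    {ℓ : ℕ} (g : Fin ℓ → (∀ j : Fin t, ZMod (p ^ e j))) (hg : IsUFIM g)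
    (P : Finpartition (Finset.univ : Finset (Fin ℓ))) (hP : IsFactorization g P)
    (hm : (P.parts.card : ℝ) ≤
      ∑ j, ((p : ℝ) ^ e j - 1) / ((p : ℝ) ^ e j - (p : ℝ) ^ (e j - 1))) :
    crossNum g ≤ ∑ j, ((p : ℝ) ^ e j - 1) / ((p : ℝ) ^ e j - (p : ℝ) ^ (e j - 1)) := by
  classical
  have hp0 : (0 : ℝ) < p := by exact_mod_cast hp.pos
  have hp1 : (1 : ℝ) < p := by exact_mod_cast hp.one_lt
  set K : ℝ := ∑ j, ((p : ℝ) ^ e j - 1) / ((p : ℝ) ^ e j - (p : ℝ) ^ (e j - 1)) with hK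
  have hKs : ∑ j, ((p : ℝ) ^ e j - 1) / (p : ℝ) ^ e j = (1 - 1 / p) * K := by
    rw [hK, Finset.mul_sum]
    refine Finset.sum_congr rfl fun j _ => ?_
    obtain ⟨n, hn⟩ : ∃ n, e j = n + 1 := ⟨e j - 1, by have := he j; omega⟩
    rw [hn, Nat.add_sub_cancel]
    have h1 : (p : ℝ) - 1 ≠ 0 := by linarith
    have h2 : (p : ℝ) ^ n ≠ 0 := by positivity
    have h3 : (p : ℝ) ^ (n + 1) - (p : ℝ) ^ n = (p : ℝ) ^ n * (p - 1) := by ring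
    rw [h3]
    field_simp
    ring
  have hex : ∀ I : Finset (Fin ℓ), ∃ R : Finset (Fin ℓ), I.Nonempty → ∃ i ∈ I, R = {i} := by
    intro I
    by_cases hI : I.Nonempty
    · obtain ⟨i, hi⟩ := hI
      exact ⟨{i}, fun _ => ⟨i, hi, rfl⟩⟩
    · exact ⟨∅, fun h => absurd h hI⟩
  choose r hr using hex
  set R : Finset (Fin ℓ) := P.parts.biUnion r with hR
  have hRcard : R.card ≤ P.parts.card := by
    have h := Finset.card_biUnion_le_card_mul P.parts r 1 (fun I hI => by
      obtain ⟨i, -, h⟩ := hr I (hP I hI).1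
      simp [h])
    simpa using h
  have hT : ∑ i ∈ Finset.univ \ R, 1 / (addOrderOf (g i) : ℝ) ≤ (1 - 1 / p) * K := by
    rw [← hKs]
    refine cross_zeroSumFree hp _ g fun J hJ hJne hJ0 => ?_
    obtain ⟨M, hMJ, hM⟩ := exists_minZeroSum_subset g J hJne hJ0
    obtain ⟨i, hi, hri⟩ := hr M hM.1
    have hiR : i ∈ R := Finset.mem_biUnion.2 ⟨M, hg.mem_parts hP hM, by simp [hri]⟩
    exact (Finset.mem_sdiff.1 (hJ (hMJ hi))).2 hiR
  have hRs : ∑ i ∈ R, 1 / (addOrderOf (g i) : ℝ) ≤ K / p := by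
    have h1 : ∀ i ∈ R, 1 / (addOrderOf (g i) : ℝ) ≤ 1 / p := by
      intro i _
      obtain ⟨k, hk⟩ := exists_addOrderOf_eq hp (g i)
      have hk0 : k ≠ 0 := by
        rintro rfl
        rw [pow_zero, AddMonoid.addOrderOf_eq_one_iff] at hk
        exact hg.1 i hk
      rw [hk]
      push_cast
      exact one_div_le_one_div_of_le hp0 (le_self_pow₀ hp1.le hk0)
    refine (Finset.sum_le_card_nsmul R _ _ h1).trans ?_
    rw [nsmul_eq_mul, mul_one_div]
    have h2 : (R.card : ℝ) ≤ P.parts.card := by exact_mod_cast hRcard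
    exact div_le_div_of_nonneg_right (h2.trans hm) hp0.le
  unfold crossNum
  rw [← Finset.sum_sdiff (Finset.subset_univ R)]
  have h5 : (1 - 1 / (p : ℝ)) * K + K / p = K := by ring
  linarith
end

section
/- Let G = ⊕_{i=1}^n ⊕_{j=1}^{n_i} C_{p_i^{e_{ij}}} be a finite abelian group written as a direct sum of prime-power cyclic groups with p_1 < ⋯ < p_n, and suppose G is not an elementary abelian p_1-group (i.e., it is not the case that both n = 1 and all e_{1j} = 1). Let S be a UFIM over G∖{0}, let S_{p_1} be the union of all irreducible factors of S all of whose elements have order p_1 (equivalently, lie in the p_1-torsion subgroup of G, which is isomorphic to C_{p_1}^{n_1}), and let m_{p_1} be the number of irreducible factors of S contained in S_{p_1}. Then: (a) if n > 1 and max_{1≤j≤n_1} e_{1j} > 1, then k(S) ≤ k(G) + ((log_2 |G|) − m_{p_1})/min{p_1², p_2} + m_{p_1}/p_1; (b) if n > 1 and max_{1≤j≤n_1} e_{1j} = 1, then k(S) ≤ k(G) + ((log_2 |G|) − m_{p_1})/p_2 + m_{p_1}/p_1; (c) if n = 1 and max_{1≤j≤n_1} e_{1j} > 1, then k(S) ≤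 k(G) + ((log_2 |G|) − m_{p_1})/p_1² + m_{p_1}/p_1. -/
open Finset

section Helpers

variable {G : Type*} [AddCommGroup G] {ℓ : ℕ} {g : Fin ℓ → G}

lemma aux_exists_min (J : Finset (Fin ℓ)) (hne : J.Nonempty) (h0 : ∑ i ∈ J, g i = 0) :
    ∃ K ⊆ J, IsMinZeroSum g K := by
  induction J using Finset.strongInduction with
  | H J ih =>
    by_cases h : ∀ K ⊂ J, K.Nonempty → ∑ i ∈ K, g i ≠ 0
    · exact ⟨J, Finset.Subset.refl _, hne, h0, h⟩
    · push Not at h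
      obtain ⟨K, hK, hKne, hK0⟩ := h
      obtain ⟨L, hL, hm⟩ := ih K hK hKne hK0
      exact ⟨L, hL.trans hK.subset, hm⟩

lemma aux_exists_fact (J : Finset (Fin ℓ)) (h0 : ∑ i ∈ J, g i = 0) :
    ∃ Q : Finpartition J, ∀ I ∈ Q.parts, IsMinZeroSum g I := by
  induction J using Finset.strongInduction with
  | H J ih =>
    rcases J.eq_empty_or_nonempty with rfl | hne
    · refine ⟨Finpartition.empty _, ?_⟩
      intro I hI
      exact absurd hI (Finset.notMem_empty I)
    · obtain ⟨K, hK, hm⟩ := aux_exists_min J hne h0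
      have hs : ∑ i ∈ J \ K, g i = 0 := by
        have := Finset.sum_sdiff (f := g) hK
        rw [hm.2.1, add_zero, h0] at this
        exact this
      obtain ⟨Q, hQ⟩ := ih (J \ K) (Finset.sdiff_ssubset hK hm.1) hs
      refine ⟨Q.extend (b := K) hm.1.ne_empty Finset.sdiff_disjoint
        (Finset.sdiff_union_of_subset hK), ?_⟩
      intro I hI
      rw [Finpartition.extend_parts, Finset.mem_insert] at hI
      rcases hI with rfl | hI
      · exact hm
      · exact hQ I hI

variable {P : Finpartition (Finset.univ : Finset (Fin ℓ))}

lemma aux_sum_univ (hP : IsFactorization g P) : ∑ i, g i = 0 := by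
  have h : ∑ i ∈ P.parts.biUnion id, g i = ∑ I ∈ P.parts, ∑ i ∈ I, g i :=
    Finset.sum_biUnion P.disjoint
  rw [P.biUnion_parts] at h
  rw [h]
  exact Finset.sum_eq_zero fun I hI => (hP I hI).2.1

lemma aux_min_mem (hg : IsUFIM g) (hP : IsFactorization g P) (K : Finset (Fin ℓ))
    (hm : IsMinZeroSum g K) : K ∈ P.parts := by
  have hs : ∑ i ∈ univ \ K, g i = 0 := by
    have := Finset.sum_sdiff (f := g) (Finset.subset_univ K)
    rw [hm.2.1, add_zero, aux_sum_univ hP] at this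
    exact this
  obtain ⟨Q, hQ⟩ := aux_exists_fact (univ \ K) hs
  have hR : IsFactorization g (Q.extend (b := K) hm.1.ne_empty Finset.sdiff_disjoint
        (Finset.sdiff_union_of_subset (Finset.subset_univ K))) := by
    intro I hI
    rw [Finpartition.extend_parts, Finset.mem_insert] at hI
    rcases hI with rfl | hI
    · exact hm
    · exact hQ I hI
  have := hg.2.unique hP hR
  rw [this, Finpartition.extend_parts]
  exact Finset.mem_insert_self _ _

lemma aux_subset (hg : IsUFIM g) (hP : IsFactorization g P) (J : Finset (Fin ℓ))
    (h0 : ∑ i ∈ J, g i = 0) {i : Fin ℓ} (hi : i ∈ J) {I : Finset (Fin ℓ)} (hI : I ∈ P.parts)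
    (hiI : i ∈ I) : I ⊆ J := by
  obtain ⟨Q, hQ⟩ := aux_exists_fact J h0
  obtain ⟨K, hK, hiK⟩ := Q.exists_mem hi
  have hKP := aux_min_mem hg hP K (hQ K hK)
  have : K = I := P.eq_of_mem_parts hKP hI hiK hiI
  subst this
  exact Q.le hK

lemma aux_other (hg : IsUFIM g) (hP : IsFactorization g P) {I : Finset (Fin ℓ)}
    (hI : I ∈ P.parts) {a : Fin ℓ} : ∃ y ∈ I, y ≠ a := by
  by_contra h
  push Not at h
  have hI' := hP I hI
  have : I = {a} := Finset.eq_singleton_iff_nonempty_unique_mem.2 ⟨hI'.1, h⟩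
  have h0 := hI'.2.1
  rw [this, Finset.sum_singleton] at h0
  exact hg.1 a h0

lemma aux_inj (hg : IsUFIM g) (hP : IsFactorization g P) (x : Finset (Fin ℓ) → Fin ℓ)
    (hx : ∀ I ∈ P.parts, x I ∈ I) (A B : Finset (Finset (Fin ℓ))) (hA : A ⊆ P.parts)
    (hB : B ⊆ P.parts) (hAB : ∑ I ∈ A, g (x I) = ∑ I ∈ B, g (x I)) : A ⊆ B := by
  by_contra hn
  obtain ⟨I, hIA, hIB⟩ := Finset.not_subset.1 hn
  have hxeq : ∀ I ∈ P.parts, ∀ I' ∈ P.parts, x I ∈ I' → I = I' := fun I hI I' hI' h =>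
    P.eq_of_mem_parts hI hI' (hx I hI) h
  have hdisj : Disjoint ((A \ B).image x) ((B \ A).biUnion fun I => I.erase (x I)) := by
    rw [Finset.disjoint_left]
    intro a ha hb
    simp only [Finset.mem_image, Finset.mem_biUnion, Finset.mem_sdiff, Finset.mem_erase] at ha hb
    obtain ⟨I, hI, rfl⟩ := ha
    obtain ⟨I', hI', h1, h2⟩ := hb
    have := hxeq I (hA hI.1) I' (hB hI'.1) h2
    subst this
    exact hI.2 hI'.1
  have e1 : ∑ i ∈ (A \ B).image x, g i = ∑ I ∈ A \ B, g (x I) := by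
    refine Finset.sum_image ?_
    intro I hI I' hI' h
    have hI1 := hA (Finset.mem_sdiff.1 hI).1
    have hI2 := hA (Finset.mem_sdiff.1 hI').1
    exact hxeq I hI1 I' hI2 (h ▸ hx I' hI2)
  have e2 : ∑ i ∈ (B \ A).biUnion (fun I => I.erase (x I)), g i = - ∑ I ∈ B \ A, g (x I) := by
    rw [Finset.sum_biUnion, ← Finset.sum_neg_distrib]
    · refine Finset.sum_congr rfl fun I hI => ?_
      have hI1 := hB (Finset.mem_sdiff.1 hI).1
      have := Finset.add_sum_erase I g (hx I hI1)
      rw [(hP I hI1).2.1] at this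
      exact (neg_eq_of_add_eq_zero_right this).symm
    · intro I hI I' hI' hne
      have hI1 := hB (Finset.mem_sdiff.1 hI).1
      have hI2 := hB (Finset.mem_sdiff.1 hI').1
      exact (P.disjoint hI1 hI2 hne).mono (Finset.erase_subset _ _) (Finset.erase_subset _ _)
  have h0 : ∑ i ∈ (A \ B).image x ∪ (B \ A).biUnion (fun I => I.erase (x I)), g i = 0 := by
    rw [Finset.sum_union hdisj, e1, e2, ← sub_eq_add_neg, Finset.sum_sdiff_sub_sum_sdiff, hAB,
      sub_self]
  have hIP := hA hIA
  have hsub := aux_subset hg hP _ h0 (i := x I) (Finset.mem_union_left _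
    (Finset.mem_image_of_mem x (Finset.mem_sdiff.2 ⟨hIA, hIB⟩))) hIP (hx I hIP)
  obtain ⟨y, hy, hyx⟩ := aux_other hg hP hIP (a := x I)
  have hyJ := hsub hy
  simp only [Finset.mem_union, Finset.mem_image, Finset.mem_biUnion, Finset.mem_sdiff,
    Finset.mem_erase] at hyJ
  rcases hyJ with ⟨I', hI', rfl⟩ | ⟨I', hI', h1, h2⟩
  · exact hyx (by rw [hxeq I' (hA hI'.1) I hIP hy])
  · have := P.eq_of_mem_parts hIP (hB hI'.1) hy h2
    subst this
    exact hIB hI'.1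

lemma aux_card [Finite G] (hg : IsUFIM g) (hP : IsFactorization g P)
    (x : Finset (Fin ℓ) → Fin ℓ) (hx : ∀ I ∈ P.parts, x I ∈ I) :
    2 ^ P.parts.card ≤ Nat.card G := by
  classical
  have := Fintype.ofFinite G
  rw [← Finset.card_powerset, Nat.card_eq_fintype_card, ← Finset.card_univ]
  refine Finset.card_le_card_of_injOn (fun A => ∑ I ∈ A, g (x I)) (fun _ _ => by simp) ?_
  intro A hA B hB h
  have hA' := Finset.mem_powerset.1 hA
  have hB' := Finset.mem_powerset.1 hB
  exact Finset.Subset.antisymm (aux_inj hg hP x hx A B hA' hB' h)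
    (aux_inj hg hP x hx B A hB' hA' h.symm)

lemma aux_zsf_length [Finite G] (h : IsZeroSumFree g) : ℓ ≤ Nat.card G := by
  classical
  have := Fintype.ofFinite G
  have key : ∀ a b : Fin ℓ, a < b → ∑ i ∈ Finset.Iic a, g i ≠ ∑ i ∈ Finset.Iic b, g i := by
    intro a b hab heq
    have hs : Finset.Iic a ⊆ Finset.Iic b := Finset.Iic_subset_Iic.2 hab.le
    have := Finset.sum_sdiff (f := g) hs
    rw [heq] at this
    refine h (Finset.Iic b \ Finset.Iic a) ⟨b, ?_⟩ (by simpa using this)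
    simp [hab]
  have hinj : Function.Injective fun a : Fin ℓ => ∑ i ∈ Finset.Iic a, g i := by
    intro a b hab
    rcases lt_trichotomy a b with h1 | h1 | h1
    · exact absurd hab (key a b h1)
    · exact h1
    · exact absurd hab.symm (key b a h1)
  simpa [Nat.card_eq_fintype_card] using Fintype.card_le_of_injective _ hinj

lemma aux_bdd [Finite G] : BddAbove {x : ℝ | ∃ (ℓ : ℕ) (g : Fin ℓ → G), (∀ i, g i ≠ 0) ∧
    IsZeroSumFree g ∧ crossNum g = x} := by
  refine ⟨Nat.card G, ?_⟩
  rintro _ ⟨ℓ, g, -, hz, rfl⟩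
  have h1 : crossNum g ≤ ∑ _i : Fin ℓ, (1 : ℝ) := by
    refine Finset.sum_le_sum fun i _ => ?_
    have := addOrderOf_pos (g i)
    rw [div_le_one (by exact_mod_cast this)]
    exact_mod_cast this
  have h2 : (ℓ : ℝ) ≤ Nat.card G := by exact_mod_cast aux_zsf_length hz
  simp at h1
  simpa using h1.trans h2

lemma aux_littleCross [Finite G] (h0 : ∀ i, g i ≠ 0) (T : Finset (Fin ℓ))
    (hT : ∀ J ⊆ T, J.Nonempty → ∑ i ∈ J, g i ≠ 0) :
    ∑ i ∈ T, (1 : ℝ) / (addOrderOf (g i) : ℝ) ≤ littleCross G := by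
  refine le_csSup aux_bdd ⟨T.card, fun k => g (T.equivFin.symm k), fun _ => h0 _, ?_, ?_⟩
  · intro I hI
    have := hT (I.map (T.equivFin.symm.toEmbedding.trans (Function.Embedding.subtype _))) ?_
      (by simpa using hI)
    · simpa using this
    · intro a ha
      simp only [Finset.mem_map] at ha
      obtain ⟨k, -, rfl⟩ := ha
      exact (T.equivFin.symm k).2
  · unfold crossNum
    rw [Equiv.sum_comp T.equivFin.symm (fun i : T => (1 : ℝ) / (addOrderOf (g i) : ℝ))]
    exact Finset.sum_coe_sort T (fun i => (1 : ℝ) / (addOrderOf (g i) : ℝ))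

lemma aux_main [Finite G] (hg : IsUFIM g) (hP : IsFactorization g P) (q : ℕ) (D : ℝ) (hD : 0 < D)
    (h : ∀ y : G, y ≠ 0 → addOrderOf y ≠ q → D ≤ addOrderOf y) :
    crossNum g ≤ littleCross G + (Real.logb 2 (Nat.card G) -
      ((P.parts.filter (fun I => ∀ i ∈ I, addOrderOf (g i) = q)).card : ℕ)) / D +
      ((P.parts.filter (fun I => ∀ i ∈ I, addOrderOf (g i) = q)).card : ℕ) / (q : ℝ) := by
  classical
  rcases Nat.eq_zero_or_pos ℓ with hl | hpos
  · subst hl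
    have hlog : 0 ≤ Real.logb 2 (Nat.card G : ℝ) :=
      Real.logb_nonneg (by norm_num) (by exact_mod_cast Nat.card_pos)
    have hk : 0 ≤ littleCross G := by
      have := aux_littleCross hg.1 ∅ (by
        intro J hJ hne
        exact absurd (Finset.subset_empty.1 hJ) hne.ne_empty)
      simpa using this
    have hparts : P.parts = ∅ := by
      refine Finset.eq_empty_of_forall_notMem fun I hI => ?_
      obtain ⟨a, -⟩ := (hP I hI).1
      exact a.elim0
    simp only [hparts, Finset.filter_empty, Finset.card_empty, crossNum, Finset.univ_eq_empty,
      Finset.sum_empty, Nat.cast_zero, sub_zero, zero_div, add_zero]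
    positivity
  have hex : ∀ I : Finset (Fin ℓ), ∃ a : Fin ℓ, I ∈ P.parts → (a ∈ I ∧
      ((∀ i ∈ I, addOrderOf (g i) = q) ∨ addOrderOf (g a) ≠ q)) := by
    intro I
    by_cases hI : I ∈ P.parts
    · by_cases hq : ∀ i ∈ I, addOrderOf (g i) = q
      · obtain ⟨a, ha⟩ := (hP I hI).1
        exact ⟨a, fun _ => ⟨ha, Or.inl hq⟩⟩
      · have hq' := hq
        push Not at hq'
        obtain ⟨a, ha, hne⟩ := hq'
        exact ⟨a, fun _ => ⟨ha, Or.inr hne⟩⟩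
    · exact ⟨⟨0, hpos⟩, fun h => absurd h hI⟩
  choose x hx' using hex
  have hx : ∀ I ∈ P.parts, x I ∈ I := fun I hI => (hx' I hI).1
  have hT := aux_littleCross hg.1 (univ \ P.parts.image x) (by
    intro J hJ hne hz
    obtain ⟨i, hi⟩ := hne
    obtain ⟨I, hI, hiI⟩ := P.exists_mem (Finset.mem_univ i)
    have hs := aux_subset hg hP J hz hi hI hiI
    have := hJ (hs (hx I hI))
    exact (Finset.mem_sdiff.1 this).2 (Finset.mem_image_of_mem x hI))
  have hsplit := Finset.sum_sdiff (f := fun i => (1 : ℝ) / (addOrderOf (g i) : ℝ))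
    (Finset.subset_univ (P.parts.image x))
  have himg : ∑ i ∈ P.parts.image x, (1 : ℝ) / (addOrderOf (g i) : ℝ) =
      ∑ I ∈ P.parts, (1 : ℝ) / (addOrderOf (g (x I)) : ℝ) := by
    refine Finset.sum_image ?_
    intro I hI I' hI' hxx
    exact P.eq_of_mem_parts hI hI' (hx I hI) (hxx ▸ hx I' hI')
  have hfil := Finset.sum_filter_add_sum_filter_not P.parts
    (fun I => ∀ i ∈ I, addOrderOf (g i) = q)
    (fun I => (1 : ℝ) / (addOrderOf (g (x I)) : ℝ))
  have hcard := Finset.card_filter_add_card_filter_not (s := P.parts)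
    (fun I => ∀ i ∈ I, addOrderOf (g i) = q)
  have h1 : ∑ I ∈ P.parts with (∀ i ∈ I, addOrderOf (g i) = q),
      (1 : ℝ) / (addOrderOf (g (x I)) : ℝ) =
      ((P.parts.filter (fun I => ∀ i ∈ I, addOrderOf (g i) = q)).card : ℕ) / (q : ℝ) := by
    rw [Finset.sum_congr rfl (g := fun _ => (1 : ℝ) / (q : ℝ))]
    · rw [Finset.sum_const, nsmul_eq_mul, mul_one_div]
    · intro I hI
      rw [Finset.mem_filter] at hI
      rw [hI.2 _ (hx I hI.1)]
  have h2 : ∑ I ∈ P.parts with ¬ (∀ i ∈ I, addOrderOf (g i) = q),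
      (1 : ℝ) / (addOrderOf (g (x I)) : ℝ) ≤
      ((P.parts.filter (fun I => ¬ ∀ i ∈ I, addOrderOf (g i) = q)).card : ℕ) / D := by
    have : ∑ I ∈ P.parts with ¬ (∀ i ∈ I, addOrderOf (g i) = q),
        (1 : ℝ) / (addOrderOf (g (x I)) : ℝ) ≤
        ∑ I ∈ P.parts with ¬ (∀ i ∈ I, addOrderOf (g i) = q), 1 / D := by
      refine Finset.sum_le_sum fun I hI => ?_
      rw [Finset.mem_filter] at hI
      have hne := (hx' I hI.1).2.resolve_left hI.2
      exact one_div_le_one_div_of_le hD (h _ (hg.1 _) hne)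
    rwa [Finset.sum_const, nsmul_eq_mul, mul_one_div] at this
  have hlog : (P.parts.card : ℝ) ≤ Real.logb 2 (Nat.card G) := by
    rw [Real.le_logb_iff_rpow_le (by norm_num) (by exact_mod_cast Nat.card_pos),
      Real.rpow_natCast]
    exact_mod_cast aux_card hg hP x hx
  have h3 : ((P.parts.filter (fun I => ¬ ∀ i ∈ I, addOrderOf (g i) = q)).card : ℝ) / D ≤
      (Real.logb 2 (Nat.card G) -
        ((P.parts.filter (fun I => ∀ i ∈ I, addOrderOf (g i) = q)).card : ℕ)) / D := by
    refine div_le_div_of_nonneg_right ?_ hD.le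
    rw [← hcard] at hlog
    push_cast at hlog
    linarith
  unfold crossNum
  linarith

/-- A positive integer `r ≠ 1` dividing `a * M`, with `a` a power of the prime `q`, and all primes
dividing `M` at least `s`. -/
lemma aux_order {q s M c r : ℕ} (hq : q.Prime) (hM : ∀ t, t.Prime → t ∣ M → s ≤ t)
    (hr1 : r ≠ 1) (hr0 : 0 < r) (hrq : r ≠ q) (hr : r ∣ q ^ c * M) :
    s ≤ r ∨ (q ^ 2 ≤ r ∧ 1 < c) := by
  by_cases h : ∃ t, t.Prime ∧ t ∣ r ∧ t ∣ M
  · obtain ⟨t, ht, htr, htM⟩ := h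
    exact Or.inl ((hM t ht htM).trans (Nat.le_of_dvd hr0 htr))
  · right
    have hc : Nat.Coprime r M := by
      by_contra hc
      obtain ⟨t, ht, h1, h2⟩ := Nat.Prime.not_coprime_iff_dvd.1 hc
      exact h ⟨t, ht, h1, h2⟩
    have h1 := hc.dvd_of_dvd_mul_right hr
    obtain ⟨k, hk, rfl⟩ := (Nat.dvd_prime_pow hq).1 h1
    have hk0 : k ≠ 0 := by rintro rfl; simp at hr1
    have hk1 : k ≠ 1 := by rintro rfl; simp at hrq
    exact ⟨Nat.pow_le_pow_right hq.pos (by omega), by omega⟩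

end Helpers

/-- Lemma (lowestorder): let `G = ⊕_{i=1}^n ⊕_{j=1}^{n_i} C_{p_i^{e_{ij}}}` with
`p_1 < ⋯ < p_n` primes, and suppose `G` is not an elementary abelian `p_1`-group.
For a UFIM `S` over `G∖{0}` with irreducible factorization `P`, let `m_{p_1}` be the number
of irreducible factors all of whose elements have order `p_1`. Then:
(a) if `n > 1` and some `e_{1j} > 1`, `k(S) ≤ k(G) + (log₂|G| − m_{p_1})/min(p_1², p_2) + m_{p_1}/p_1`;
(b) if `n > 1` and all `e_{1j} = 1`, `k(S) ≤ k(G) + (log₂|G| − m_{p_1})/p_2 + m_{p_1}/p_1`;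
(c) if `n = 1` and some `e_{1j} > 1`, `k(S) ≤ k(G) + (log₂|G| − m_{p_1})/p_1² + m_{p_1}/p_1`. -/
theorem crossNum_le_lowestorder (n : ℕ) (hn : 0 < n)
    (p : Fin n → ℕ) (hp : ∀ i, (p i).Prime) (hmono : StrictMono p)
    (nn : Fin n → ℕ) (hnn : ∀ i, 0 < nn i)
    (e : (i : Fin n) → Fin (nn i) → ℕ) (he : ∀ i j, 0 < e i j)
    (hG : ¬ (n = 1 ∧ ∀ i j, e i j = 1))
    {ℓ : ℕ} (g : Fin ℓ → ((i : Fin n) → (j : Fin (nn i)) → ZMod (p i ^ e i j)))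
    (hg : IsUFIM g)
    (P : Finpartition (Finset.univ : Finset (Fin ℓ))) (hP : IsFactorization g P) :
    let G := (i : Fin n) → (j : Fin (nn i)) → ZMod (p i ^ e i j)
    let p1 : ℝ := (p ⟨0, hn⟩ : ℝ)
    let mP : ℕ :=
      (P.parts.filter (fun I => ∀ i ∈ I, addOrderOf (g i) = p ⟨0, hn⟩)).card
    let logG : ℝ := Real.logb 2 (∏ i, ∏ j, (p i : ℝ) ^ e i j)
    ((∀ (h2 : 1 < n), (∃ j, 1 < e ⟨0, hn⟩ j) →
        crossNum g ≤ littleCross G +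
          (logG - mP) / min (p1 ^ 2) ((p ⟨1, h2⟩ : ℝ)) + (mP : ℝ) / p1) ∧
     (∀ (h2 : 1 < n), (∀ j, e ⟨0, hn⟩ j = 1) →
        crossNum g ≤ littleCross G +
          (logG - mP) / (p ⟨1, h2⟩ : ℝ) + (mP : ℝ) / p1) ∧
     (n = 1 → (∃ j, 1 < e ⟨0, hn⟩ j) →
        crossNum g ≤ littleCross G +
          (logG - mP) / (p1 ^ 2) + (mP : ℝ) / p1)) := by
  classical
  have : ∀ i j, NeZero (p i ^ e i j) := fun i j => ⟨pow_ne_zero _ (hp i).ne_zero⟩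
  intro G p1 mP logG
  have hcardG : (Nat.card G : ℝ) = ∏ i, ∏ j, (p i : ℝ) ^ e i j := by
    simp [G, Nat.card_pi]
  -- orders of elements
  have hord : ∀ (c : ℕ), (∀ j, e ⟨0, hn⟩ j ≤ c) → ∀ y : G,
      addOrderOf y ∣ p ⟨0, hn⟩ ^ c * ∏ i ∈ univ.erase (⟨0, hn⟩ : Fin n), ∏ j, p i ^ e i j := by
    intro c hc y
    rw [addOrderOf_dvd_iff_nsmul_eq_zero]
    funext i j
    have : p i ^ e i j ∣
        p ⟨0, hn⟩ ^ c * ∏ i ∈ univ.erase (⟨0, hn⟩ : Fin n), ∏ j, p i ^ e i j := by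
      by_cases hi : i = ⟨0, hn⟩
      · subst hi
        exact (pow_dvd_pow _ (hc j)).mul_right _
      · refine Dvd.dvd.mul_left ?_ _
        exact (Finset.dvd_prod_of_mem (fun j => p i ^ e i j) (Finset.mem_univ j)).trans
          (Finset.dvd_prod_of_mem (fun i => ∏ j, p i ^ e i j)
            (Finset.mem_erase.2 ⟨hi, Finset.mem_univ i⟩))
    rw [Pi.smul_apply, Pi.smul_apply, nsmul_eq_mul, (ZMod.natCast_eq_zero_iff _ _).2 this, zero_mul]
    rfl
  have hM : ∀ t, t.Prime → t ∣ ∏ i ∈ univ.erase (⟨0, hn⟩ : Fin n), ∏ j, p i ^ e i j →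
      ∃ i, i ≠ ⟨0, hn⟩ ∧ t = p i := by
    intro t ht hd
    obtain ⟨i, hi, hd⟩ := (ht.prime.dvd_finsetProd_iff _).1 hd
    obtain ⟨j, -, hd⟩ := (ht.prime.dvd_finsetProd_iff _).1 hd
    exact ⟨i, (Finset.mem_erase.1 hi).1,
      (Nat.prime_dvd_prime_iff_eq ht (hp i)).1 (ht.dvd_of_dvd_pow hd)⟩
  have hM2 : ∀ (h2 : 1 < n) (t : ℕ), t.Prime →
      t ∣ ∏ i ∈ univ.erase (⟨0, hn⟩ : Fin n), ∏ j, p i ^ e i j → p ⟨1, h2⟩ ≤ t := by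
    intro h2 t ht hd
    obtain ⟨i, hi, rfl⟩ := hM t ht hd
    refine hmono.monotone ?_
    rw [Fin.le_def]
    have : i.val ≠ 0 := fun h => hi (Fin.ext h)
    change 1 ≤ i.val
    omega
  have hmax : ∃ c, ∀ j, e ⟨0, hn⟩ j ≤ c :=
    ⟨∑ j, e ⟨0, hn⟩ j, fun j => Finset.single_le_sum (fun _ _ => Nat.zero_le _) (Finset.mem_univ j)⟩
  obtain ⟨c, hc⟩ := hmax
  have hp0 : ∀ i, (0 : ℝ) < p i := fun i => by exact_mod_cast (hp i).pos
  have hmain := fun (D : ℝ) (hD : 0 < D) h => aux_main hg hP (p ⟨0, hn⟩) D hD h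
  have hne1 : ∀ y : G, y ≠ 0 → addOrderOf y ≠ 1 := fun y hy h =>
    hy (AddMonoid.addOrderOf_eq_one_iff.1 h)
  simp only [G] at hcardG
  rw [hcardG] at hmain
  refine ⟨fun h2 _ => ?_, fun h2 hj => ?_, fun h1 _ => ?_⟩
  · refine hmain _ (lt_min (pow_pos (hp0 _) 2) (hp0 _)) fun y hy hyq => ?_
    rcases aux_order (hp _) (hM2 h2) (hne1 y hy) (addOrderOf_pos y) hyq (hord c hc y) with h | h
    · exact (min_le_right _ _).trans (by exact_mod_cast h)
    · exact (min_le_left _ _).trans (by simp only [p1]; exact_mod_cast h.1)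
  · refine hmain _ (hp0 _) fun y hy hyq => ?_
    rcases aux_order (hp _) (hM2 h2) (hne1 y hy) (addOrderOf_pos y) hyq
      (hord 1 (fun j => (hj j).le) y) with h | h
    · exact_mod_cast h
    · exact absurd h.2 (lt_irrefl _)
  · refine hmain _ (pow_pos (hp0 _) 2) fun y hy hyq => ?_
    rcases aux_order (s := addOrderOf y + 1) (hp _) (fun t ht hd => by
      obtain ⟨i, hi, -⟩ := hM t ht hd
      exact absurd (Fin.ext (by have := i.2; change i.val = 0; omega)) hi)
      (hne1 y hy) (addOrderOf_pos y) hyq (hord c hc y) with h | h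
    · omega
    · simp only [p1]; exact_mod_cast h.1
end

section
/- For any nontrivial finite abelian group G, K_1(G) − k(G) ≤ (log_2 |G|)/P^−(|G|), where P^−(n) denotes the smallest prime divisor of n. -/
open Finset

theorem exists_family {G : Type*} [AddCommGroup G] {ℓ : ℕ} (g : Fin ℓ → G)
    (T : Finset (Fin ℓ)) : ∑ i ∈ T, g i = 0 →
    ∃ F : Finset (Finset (Fin ℓ)), (∀ I ∈ F, IsMinZeroSum g I) ∧
      (F : Set (Finset (Fin ℓ))).PairwiseDisjoint id ∧ F.sup id = T := by
  induction T using Finset.strongInduction with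
  | H T ih =>
    intro hT
    rcases T.eq_empty_or_nonempty with rfl | hne
    · exact ⟨∅, by simp, by simp, by simp⟩
    · obtain ⟨J, hJT, hJ⟩ : ∃ J ⊆ T, IsMinZeroSum g J := by
        obtain ⟨J, hle, hmin⟩ := exists_minimal_le_of_wellFoundedLT
          (fun J : Finset (Fin ℓ) => J.Nonempty ∧ ∑ i ∈ J, g i = 0) T ⟨hne, hT⟩
        refine ⟨J, hle, hmin.1.1, hmin.1.2, ?_⟩
        intro K hK hKn h0
        exact hK.2 (hmin.2 ⟨hKn, h0⟩ hK.1)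
      have hsum : ∑ i ∈ T \ J, g i = 0 := by
        have := Finset.sum_sdiff (f := g) hJT
        rw [hJ.2.1, hT, add_zero] at this
        exact this
      obtain ⟨F, hF, hd, hs⟩ := ih (T \ J) (Finset.sdiff_ssubset hJT hJ.1) hsum
      refine ⟨insert J F, ?_, ?_, ?_⟩
      · intro I hI
        rcases Finset.mem_insert.1 hI with rfl | h
        · exact hJ
        · exact hF I h
      · rw [Finset.coe_insert]
        refine hd.insert ?_
        intro I hI _
        have : I ⊆ T \ J := hs ▸ Finset.le_sup (f := id) hI
        exact (Finset.disjoint_sdiff).mono_right this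
      · rw [Finset.sup_insert, hs]
        simp only [id, Finset.sup_eq_union]
        exact Finset.union_sdiff_of_subset hJT

theorem sum_univ_of_factorization {G : Type*} [AddCommGroup G] {ℓ : ℕ} (g : Fin ℓ → G)
    (P : Finpartition (Finset.univ : Finset (Fin ℓ))) (hP : IsFactorization g P) :
    ∑ i, g i = 0 := by
  rw [← P.biUnion_parts, Finset.sum_biUnion P.disjoint]
  exact Finset.sum_eq_zero fun I hI => (hP I hI).2.1

theorem part_subset_or_disjoint {G : Type*} [AddCommGroup G] {ℓ : ℕ} (g : Fin ℓ → G)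
    (P : Finpartition (Finset.univ : Finset (Fin ℓ))) (hP : IsFactorization g P)
    (hu : ∀ Q, IsFactorization g Q → Q = P)
    (T : Finset (Fin ℓ)) (hT : ∑ i ∈ T, g i = 0) (I : Finset (Fin ℓ)) (hI : I ∈ P.parts) :
    I ⊆ T ∨ Disjoint I T := by
  have hTc : ∑ i ∈ Tᶜ, g i = 0 := by
    have := Finset.sum_add_sum_compl T g
    rw [hT, sum_univ_of_factorization g P hP, zero_add] at this
    exact this
  obtain ⟨F, hF, hd, hs⟩ := exists_family g T hT
  obtain ⟨F', hF', hd', hs'⟩ := exists_family g Tᶜ hTc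
  have h1 : ∀ I ∈ F, I ⊆ T := fun I hI => hs ▸ Finset.le_sup (f := id) hI
  have h2 : ∀ I ∈ F', I ⊆ Tᶜ := fun I hI => hs' ▸ Finset.le_sup (f := id) hI
  have hall : ∀ I ∈ F ∪ F', IsMinZeroSum g I := by
    intro I hI
    rcases Finset.mem_union.1 hI with h | h
    · exact hF I h
    · exact hF' I h
  let Q : Finpartition (Finset.univ : Finset (Fin ℓ)) :=
    { parts := F ∪ F'
      supIndep := by
        rw [Finset.supIndep_iff_pairwiseDisjoint, Finset.coe_union]
        refine hd.union hd' ?_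
        intro A hA B hB _
        exact (disjoint_compl_right (a := T)).mono (h1 A hA) (h2 B hB)
      sup_parts := by
        rw [Finset.sup_union, hs, hs']
        simp
      bot_notMem := by
        intro h
        have := (hall _ h).1
        simp at this }
  have hQ : Q = P := hu Q hall
  have hI' : I ∈ F ∪ F' := by rw [← hQ] at hI; exact hI
  rcases Finset.mem_union.1 hI' with h | h
  · exact Or.inl (h1 I h)
  · exact Or.inr ((disjoint_compl_left (a := T)).mono_left (h2 I h))

theorem two_pow_parts_le {G : Type*} [AddCommGroup G] [Fintype G] {ℓ : ℕ} (g : Fin ℓ → G)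
    (h0 : ∀ i, g i ≠ 0)
    (P : Finpartition (Finset.univ : Finset (Fin ℓ))) (hP : IsFactorization g P)
    (hu : ∀ Q, IsFactorization g Q → Q = P)
    (x : Finset (Fin ℓ) → Fin ℓ) (hx : ∀ I ∈ P.parts, x I ∈ I) :
    2 ^ P.parts.card ≤ Fintype.card G := by
  classical
  have hsing : ∀ I ∈ P.parts, I ≠ {x I} := by
    intro I hI h
    have := (hP I hI).2.1
    rw [h, Finset.sum_singleton] at this
    exact h0 _ this
  have key : ∀ A ∈ P.parts.powerset, ∀ B ∈ P.parts.powerset,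
      ∑ I ∈ A, g (x I) = ∑ I ∈ B, g (x I) → A = B := by
    intro A hA B hB hAB
    rw [Finset.mem_powerset] at hA hB
    let h : Finset (Fin ℓ) → Finset (Fin ℓ) := fun I =>
      if I ∈ A ∧ I ∉ B then {x I} else if I ∈ B ∧ I ∉ A then I.erase (x I) else ∅
    have hsub : ∀ I ∈ P.parts, h I ⊆ I := by
      intro I hI
      simp only [h]
      split_ifs
      · simpa using hx I hI
      · exact Finset.erase_subset _ _
      · simp
    have hdis : (P.parts : Set (Finset (Fin ℓ))).PairwiseDisjoint h := by
      intro I hI J hJ hne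
      exact (P.disjoint hI hJ hne).mono (hsub I hI) (hsub J hJ)
    have hsum : ∑ i ∈ P.parts.biUnion h, g i = 0 := by
      rw [Finset.sum_biUnion hdis]
      have e1 : ∀ I ∈ P.parts, ∑ i ∈ h I, g i =
          (if I ∈ A then g (x I) else 0) - (if I ∈ B then g (x I) else 0) := by
        intro I hI
        have he := Finset.add_sum_erase I g (hx I hI)
        rw [(hP I hI).2.1] at he
        by_cases ha : I ∈ A <;> by_cases hb : I ∈ B <;> simp [h, ha, hb]
        exact eq_neg_of_add_eq_zero_right he
      rw [Finset.sum_congr rfl e1, Finset.sum_sub_distrib, ← Finset.sum_filter,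
        ← Finset.sum_filter, Finset.filter_mem_eq_inter, Finset.filter_mem_eq_inter,
        Finset.inter_eq_right.2 hA, Finset.inter_eq_right.2 hB, hAB, sub_self]
    have hpart : ∀ I ∈ P.parts, h I = I ∨ h I = ∅ := by
      intro I hI
      rcases part_subset_or_disjoint g P hP hu _ hsum I hI with hs | hd
      · left
        refine Finset.Subset.antisymm (hsub I hI) ?_
        intro i hi
        obtain ⟨J, hJ, hiJ⟩ := Finset.mem_biUnion.1 (hs hi)
        have : J = I := P.eq_of_mem_parts hJ hI (hsub J hJ hiJ) hi
        rwa [← this]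
      · right
        rw [← Finset.disjoint_self_iff_empty]
        exact hd.mono (hsub I hI) (Finset.subset_biUnion_of_mem h hI)
    ext I
    constructor
    · intro ha
      by_contra hb
      have hI := hA ha
      have := hpart I hI
      simp only [h, ha, hb, not_false_eq_true, and_self, if_true] at this
      rcases this with h | h
      · exact hsing I hI h.symm
      · simp at h
    · intro hb
      by_contra ha
      have hI := hB hb
      have := hpart I hI
      simp only [h, ha, hb, not_false_eq_true, and_self, if_true, false_and, if_false] at this
      rcases this with h | h
      · exact absurd (hx I hI) (Finset.erase_eq_self.1 h)
      · rcases (Finset.erase_eq_empty_iff _ _).1 h with h | h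
        · rw [h] at hI
          exact P.bot_notMem hI
        · exact hsing I hI h
  rw [← Finset.card_powerset, ← Finset.card_univ]
  exact Finset.card_le_card_of_injOn (fun A => ∑ I ∈ A, g (x I)) (by simp)
    (fun A hA B hB => key A hA B hB)

theorem zsf_length_le {G : Type*} [AddCommGroup G] [Fintype G] {ℓ : ℕ} (g : Fin ℓ → G)
    (h : IsZeroSumFree g) : ℓ ≤ Fintype.card G := by
  have hlt : ∀ a b : Fin ℓ, a < b → ∑ i ∈ Finset.Iic a, g i ≠ ∑ i ∈ Finset.Iic b, g i := by
    intro a b hab heq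
    have hs : Finset.Iic a ⊆ Finset.Iic b := Finset.Iic_subset_Iic.2 hab.le
    have := Finset.sum_sdiff (f := g) hs
    rw [heq] at this
    refine h (Finset.Iic b \ Finset.Iic a) ⟨b, ?_⟩ (by simpa using this)
    simp [hab]
  have hinj : Function.Injective (fun a : Fin ℓ => ∑ i ∈ Finset.Iic a, g i) := by
    intro a b hab
    rcases lt_trichotomy a b with h1 | h1 | h1
    · exact absurd hab (hlt a b h1)
    · exact h1
    · exact absurd hab.symm (hlt b a h1)
  simpa using Fintype.card_le_of_injective _ hinj

theorem littleCross_bdd (G : Type*) [AddCommGroup G] [Fintype G] :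
    BddAbove {x : ℝ | ∃ (ℓ : ℕ) (g : Fin ℓ → G), (∀ i, g i ≠ 0) ∧
    IsZeroSumFree g ∧ crossNum g = x} := by
  refine ⟨Fintype.card G, ?_⟩
  rintro x ⟨ℓ, g, -, hz, rfl⟩
  have h1 : crossNum g ≤ ∑ _i : Fin ℓ, (1 : ℝ) := by
    refine Finset.sum_le_sum fun i _ => ?_
    rw [one_div]
    exact Nat.cast_inv_le_one _
  refine h1.trans ?_
  simpa using zsf_length_le g hz

theorem crossNum_le {G : Type*} [AddCommGroup G] [Fintype G] {ℓ : ℕ}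
    (g : Fin ℓ → G) (hg : IsUFIM g) :
    crossNum g ≤ littleCross G +
      Real.logb 2 (Fintype.card G) / (Nat.minFac (Fintype.card G) : ℝ) := by
  classical
  obtain ⟨h0, P, hP, hu⟩ := hg
  rcases Nat.eq_zero_or_pos ℓ with rfl | hℓ
  · have : (0 : ℝ) ≤ littleCross G := by
      apply Real.sSup_nonneg
      rintro x ⟨ℓ, g, -, -, rfl⟩
      exact Finset.sum_nonneg fun i _ => by positivity
    have h2 : (0 : ℝ) ≤ Real.logb 2 (Fintype.card G) := by
      apply Real.logb_nonneg one_lt_two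
      exact_mod_cast Fintype.card_pos
    simp only [crossNum, Finset.univ_eq_empty, Finset.sum_empty]
    positivity
  have hex : ∀ I : Finset (Fin ℓ), ∃ i, I ∈ P.parts → i ∈ I := by
    intro I
    by_cases hI : I ∈ P.parts
    · obtain ⟨i, hi⟩ := (hP I hI).1
      exact ⟨i, fun _ => hi⟩
    · exact ⟨⟨0, hℓ⟩, fun h => absurd h hI⟩
  choose x hx using hex
  have hpow := two_pow_parts_le g h0 P hP hu x hx
  set R := P.parts.image x with hR
  have hfac : (0 : ℝ) < (Nat.minFac (Fintype.card G) : ℝ) := by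
    exact_mod_cast Nat.minFac_pos _
  have hm : (P.parts.card : ℝ) ≤ Real.logb 2 (Fintype.card G) := by
    rw [Real.le_logb_iff_rpow_le one_lt_two (by exact_mod_cast Fintype.card_pos)]
    rw [Real.rpow_natCast]
    exact_mod_cast hpow
  have hRsum : ∑ i ∈ R, (1 : ℝ) / (addOrderOf (g i) : ℝ) ≤
      Real.logb 2 (Fintype.card G) / (Nat.minFac (Fintype.card G) : ℝ) := by
    have h1 : ∀ i ∈ R, (1 : ℝ) / (addOrderOf (g i) : ℝ) ≤
        1 / (Nat.minFac (Fintype.card G) : ℝ) := by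
      intro i _
      apply one_div_le_one_div_of_le hfac
      have hne : addOrderOf (g i) ≠ 1 := by
        rw [Ne, AddMonoid.addOrderOf_eq_one_iff]
        exact h0 i
      have hp := addOrderOf_pos (g i)
      exact_mod_cast Nat.minFac_le_of_dvd (by omega) addOrderOf_dvd_card
    have h2 := Finset.sum_le_card_nsmul R _ _ h1
    refine h2.trans ?_
    rw [nsmul_eq_mul, mul_one_div]
    apply div_le_div_of_nonneg_right _ hfac.le
    refine le_trans ?_ hm
    exact_mod_cast Finset.card_image_le
  have hfree : ∑ i ∈ Rᶜ, (1 : ℝ) / (addOrderOf (g i) : ℝ) ≤ littleCross G := by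
    let e := Rᶜ.orderEmbOfFin rfl
    have himg : Finset.univ.map e.toEmbedding = Rᶜ := by
      simp [e]
    apply le_csSup (littleCross_bdd G)
    refine ⟨_, fun j => g (e j), fun j => h0 _, ?_, ?_⟩
    · intro J hJ hs
      have hs' : ∑ i ∈ J.map e.toEmbedding, g i = 0 := by
        rw [Finset.sum_map]; exact hs
      obtain ⟨j, hj⟩ := hJ
      have hmem : e j ∈ J.map e.toEmbedding := Finset.mem_map_of_mem _ hj
      have hsubR : J.map e.toEmbedding ⊆ Rᶜ :=
        (Finset.map_subset_map.2 (Finset.subset_univ J)).trans himg.subset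
      obtain ⟨I, hI, hjI⟩ := P.exists_mem (Finset.mem_univ (e j))
      rcases part_subset_or_disjoint g P hP hu _ hs' I hI with h | h
      · have := hsubR (h (hx I hI))
        rw [Finset.mem_compl] at this
        exact this (Finset.mem_image_of_mem x hI)
      · exact Finset.disjoint_left.1 h hjI hmem
    · unfold crossNum
      refine Eq.trans ?_ (congrArg
        (fun A : Finset (Fin ℓ) => ∑ i ∈ A, (1 : ℝ) / (addOrderOf (g i) : ℝ)) himg)
      simp only [Finset.sum_map]
      rfl
  have := Finset.sum_add_sum_compl R (fun i => (1 : ℝ) / (addOrderOf (g i) : ℝ))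
  unfold crossNum
  rw [← this]
  linarith

/-- Proposition: for any nontrivial finite abelian group `G`,
`K₁(G) − k(G) ≤ (log₂ |G|)/P⁻(|G|)`. -/
theorem K1_sub_littleCross_le {G : Type*} [AddCommGroup G] [Fintype G] [Nontrivial G] :
    K1 G - littleCross G ≤
      Real.logb 2 (Fintype.card G) / (Nat.minFac (Fintype.card G) : ℝ) := by
  rw [sub_le_iff_le_add']
  apply Real.sSup_le
  · rintro x ⟨ℓ, g, hg, rfl⟩
    exact crossNum_le g hg
  · have : (0 : ℝ) ≤ littleCross G := by
      apply Real.sSup_nonneg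
      rintro x ⟨ℓ, g, -, -, rfl⟩
      exact Finset.sum_nonneg fun i _ => by positivity
    have h2 : (0 : ℝ) ≤ Real.logb 2 (Fintype.card G) := by
      apply Real.logb_nonneg one_lt_two
      exact_mod_cast Fintype.card_pos
    positivity
end
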